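/- arXiv:2010.04662 — 4 statements merged into one kernel-verified Lean document; each statement's English description precedes it below -/
import Mathlib

section
/- Let K be a field, s ∈ ℤ^m, let P ∈ K[x]^{m×m} be in −s-weak Popov form, let δ ∈ ℕ^m be the −s-pivot degree of P, and assume s ≥ δ entrywise. Set d = (s − δ, δ) ∈ ℤ^{2m} (concatenation) and F = [P; −I_m] ∈ K[x]^{2m×m}. Let [Ũ R̃] ∈ K[x]^{m×2m} be any basis of the left kernel of F which is in −d-reduced form, where Ũ and R̃ are both m×m. Then R̃ is a −δ-reduced form of P, the matrix lm_{−δ}(R̃) ∈ K^{m×m} is invertible, and lm_{−δ}(R̃)^{−1}·R̃ is the −s-Popov form of P. -/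
open Polynomial Matrix

/-- The degree of a polynomial, viewed in `ℤ ∪ {-∞}`. -/
noncomputable def degZ {K : Type*} [Field K] (p : K[X]) : WithBot ℤ :=
  p.degree.map fun a : ℕ => (a : ℤ)

/-- The `s`-row degree of a (row) vector of polynomials. -/
noncomputable def rdegRow {K : Type*} [Field K] {ν : Type*} [Fintype ν]
    (s : ν → ℤ) (v : ν → K[X]) : WithBot ℤ :=
  Finset.univ.sup fun j => degZ (v j) + (s j : WithBot ℤ)

/-- The `s`-row degree of a polynomial matrix. -/
noncomputable def rdeg {K : Type*} [Field K] {ι ν : Type*} [Fintype ν]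
    (s : ν → ℤ) (P : Matrix ι ν K[X]) : ι → WithBot ℤ :=
  fun i => rdegRow s (P i)

/-- The `t`-column degree of a polynomial matrix. -/
noncomputable def cdeg {K : Type*} [Field K] {ι ν : Type*} [Fintype ι]
    (t : ι → ℤ) (P : Matrix ι ν K[X]) : ν → WithBot ℤ :=
  fun j => Finset.univ.sup fun i => degZ (P i j) + (t i : WithBot ℤ)

/-- Coefficient of integer degree `d` of a polynomial (0 if `d < 0`). -/
noncomputable def coeffZ {K : Type*} [Field K] (p : K[X]) (d : ℤ) : K :=
  if 0 ≤ d then p.coeff d.toNat else 0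

/-- The `s`-leading matrix of a polynomial matrix. -/
noncomputable def lm {K : Type*} [Field K] {ι ν : Type*} [Fintype ν]
    (s : ν → ℤ) (P : Matrix ι ν K[X]) : Matrix ι ν K :=
  Matrix.of fun i j =>
    (rdeg s P i).recBotCoe 0 fun t => coeffZ (P i j) (t - s j)

/-- `P` is in `s`-reduced form: its `s`-leading matrix has full row rank,
i.e. its rows are linearly independent over `K`. -/
def IsReducedForm {K : Type*} [Field K] {ι ν : Type*} [Fintype ν]
    (s : ν → ℤ) (P : Matrix ι ν K[X]) : Prop :=
  LinearIndependent K fun i => lm s P i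

open Classical in
/-- The `s`-pivot index of a row vector: the largest column index where the
`s`-row degree is attained (with a nonzero entry); `⊥` for the zero row. -/
noncomputable def piv {K : Type*} [Field K] {ν : Type*} [Fintype ν] [LinearOrder ν]
    (s : ν → ℤ) (v : ν → K[X]) : WithBot ν :=
  (Finset.univ.filter fun j => v j ≠ 0 ∧ degZ (v j) + (s j : WithBot ℤ) = rdegRow s v).max

/-- The `s`-pivot degree of a row vector (junk value `0` for the zero row). -/
noncomputable def pivDeg {K : Type*} [Field K] {ν : Type*} [Fintype ν] [LinearOrder ν]
    (s : ν → ℤ) (v : ν → K[X]) : ℕ :=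
  ((piv s v).map fun j => (v j).natDegree).unbotD 0

/-- `P` is in `s`-weak Popov form: no zero row and strictly increasing `s`-pivot indices. -/
def IsWeakPopov {K : Type*} [Field K] {ι ν : Type*} [Fintype ν] [LinearOrder ν] [Preorder ι]
    (s : ν → ℤ) (P : Matrix ι ν K[X]) : Prop :=
  (∀ i, piv s (P i) ≠ ⊥) ∧ StrictMono fun i => piv s (P i)

/-- `P` is in `s`-unordered weak Popov form: no zero row and pairwise distinct
`s`-pivot indices. -/
def IsUWeakPopov {K : Type*} [Field K] {ι ν : Type*} [Fintype ν] [LinearOrder ν]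
    (s : ν → ℤ) (P : Matrix ι ν K[X]) : Prop :=
  (∀ i, piv s (P i) ≠ ⊥) ∧ Function.Injective fun i => piv s (P i)

/-- `P` is in `s`-Popov form: `s`-weak Popov, monic pivots, and each pivot entry
has degree strictly larger than the other entries of its column. -/
def IsPopov {K : Type*} [Field K] {ι ν : Type*} [Fintype ν] [LinearOrder ν] [Preorder ι]
    (s : ν → ℤ) (P : Matrix ι ν K[X]) : Prop :=
  IsWeakPopov s P ∧
    ∀ i (j : ν), piv s (P i) = (j : WithBot ν) →
      (P i j).Monic ∧ ∀ i', i' ≠ i → (P i' j).degree < (P i j).degree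

/-- The row space of a polynomial matrix. -/
noncomputable def rowSpace {K : Type*} [Field K] {ι ν : Type*} (P : Matrix ι ν K[X]) :
    Submodule K[X] (ν → K[X]) :=
  Submodule.span K[X] (Set.range fun i => P i)

/-- The rows of `B` form a basis of the module `M`. -/
def IsBasisOf {K : Type*} [Field K] {ι ν : Type*} (B : Matrix ι ν K[X])
    (M : Submodule K[X] (ν → K[X])) : Prop :=
  LinearIndependent K[X] (fun i => B i) ∧
    Submodule.span K[X] (Set.range fun i => B i) = M

/-- The left kernel of a polynomial matrix. -/
noncomputable def leftKernel {K : Type*} [Field K] {ι ν : Type*} [Fintype ι]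
    (F : Matrix ι ν K[X]) : Submodule K[X] (ι → K[X]) :=
  LinearMap.ker F.vecMulLinear

/-- Integer degree bound. -/
def DB {K : Type*} [Field K] (p : K[X]) (a : ℤ) : Prop := ∀ n : ℕ, a < n → p.coeff n = 0

theorem degZ_zero {K : Type*} [Field K] : degZ (0 : K[X]) = ⊥ := by
  simp [degZ]

theorem degZ_ne {K : Type*} [Field K] {p : K[X]} (hp : p ≠ 0) :
    degZ p = ((p.natDegree : ℤ) : WithBot ℤ) := by
  unfold degZ
  rw [degree_eq_natDegree hp]
  rfl

theorem DB_zero {K : Type*} [Field K] (a : ℤ) : DB (0 : K[X]) a := by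
  intro n _; simp

theorem DB_mono {K : Type*} [Field K] {p : K[X]} {a b : ℤ} (h : DB p a) (hab : a ≤ b) :
    DB p b := fun n hn => h n (by omega)

theorem DB_iff {K : Type*} [Field K] {p : K[X]} (hp : p ≠ 0) (a : ℤ) :
    DB p a ↔ (p.natDegree : ℤ) ≤ a := by
  constructor
  · intro h
    by_contra hc
    have := h p.natDegree (by omega)
    exact hp (leadingCoeff_eq_zero.mp this)
  · intro h n hn
    exact coeff_eq_zero_of_natDegree_lt (by omega)

theorem DB_neg {K : Type*} [Field K] {p : K[X]} {a : ℤ} (h : DB p a) (ha : a < 0) : p = 0 := by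
  ext n
  simpa using h n (by omega)

theorem DB_iff_natDegree {K : Type*} [Field K] {p : K[X]} (a : ℕ) :
    DB p a ↔ p.natDegree ≤ a := by
  by_cases hp : p = 0
  · subst hp; simp [DB_zero]
  · rw [DB_iff hp]; omega

theorem degZ_le {K : Type*} [Field K] (p : K[X]) (s c : ℤ) :
    degZ p + (s : WithBot ℤ) ≤ (c : WithBot ℤ) ↔ DB p (c - s) := by
  by_cases hp : p = 0
  · subst hp; simp [degZ_zero, DB_zero]
  · rw [DB_iff hp, degZ_ne hp, ← WithBot.coe_add, WithBot.coe_le_coe]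
    omega

theorem rdegRow_le {K : Type*} [Field K] {ν : Type*} [Fintype ν]
    (s : ν → ℤ) (v : ν → K[X]) (c : ℤ) :
    rdegRow s v ≤ (c : WithBot ℤ) ↔ ∀ j, DB (v j) (c - s j) := by
  unfold rdegRow
  simp [Finset.sup_le_iff, degZ_le]

theorem coeffZ_natDegree {K : Type*} [Field K] (p : K[X]) (n : ℕ) :
    coeffZ p (n : ℤ) = p.coeff n := by
  simp [coeffZ]

theorem coeffZ_zero {K : Type*} [Field K] (n : ℤ) :
    coeffZ (0 : K[X]) n = 0 := by
  simp [coeffZ]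

theorem coeffZ_of_DB {K : Type*} [Field K] {p : K[X]} {a n : ℤ} (h : DB p a) (hn : a < n) :
    coeffZ p n = 0 := by
  unfold coeffZ
  split_ifs with h0
  · exact h _ (by omega)
  · rfl

theorem coeffZ_sum {K : Type*} [Field K] {ι : Type*} [Fintype ι] (f : ι → K[X]) (n : ℤ) :
    coeffZ (∑ i, f i) n = ∑ i, coeffZ (f i) n := by
  unfold coeffZ
  split_ifs with h0
  · simp
  · simp

theorem coeffZ_mul {K : Type*} [Field K] {p q : K[X]} {a b : ℤ} (hp : DB p a) (hq : DB q b) :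
    coeffZ (p * q) (a + b) = coeffZ p a * coeffZ q b := by
  by_cases ha : a < 0
  · rw [DB_neg hp ha]; simp [coeffZ_zero]
  by_cases hb : b < 0
  · rw [DB_neg hq hb]; simp [coeffZ_zero]
  lift a to ℕ using by omega
  lift b to ℕ using by omega
  rw [← Nat.cast_add, coeffZ_natDegree, coeffZ_natDegree, coeffZ_natDegree]
  exact coeff_mul_add_eq_of_natDegree_le ((DB_iff_natDegree a).mp hp) ((DB_iff_natDegree b).mp hq)

theorem rdegRow_eq {K : Type*} [Field K] {ν : Type*} [Fintype ν]
    (s : ν → ℤ) (v : ν → K[X]) (c : ℤ) (h : ∀ j, DB (v j) (c - s j))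
    (h2 : ∃ j, coeffZ (v j) (c - s j) ≠ 0) : rdegRow s v = (c : WithBot ℤ) := by
  apply le_antisymm ((rdegRow_le s v c).mpr h)
  by_contra hc
  have : rdegRow s v ≤ ((c - 1 : ℤ) : WithBot ℤ) := by
    rw [not_le] at hc
    cases hr : rdegRow s v with
    | bot => simp
    | coe t =>
      rw [hr] at hc
      have := WithBot.coe_lt_coe.mp hc
      exact WithBot.coe_le_coe.mpr (by omega)
  rw [rdegRow_le] at this
  obtain ⟨j, hj⟩ := h2
  exact hj (coeffZ_of_DB (this j) (by omega))

theorem lm_eq {K : Type*} [Field K] {ι ν : Type*} [Fintype ν]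
    (s : ν → ℤ) (P : Matrix ι ν K[X]) (i : ι) (j : ν) (t : ℤ)
    (h : rdegRow s (P i) = (t : WithBot ℤ)) : lm s P i j = coeffZ (P i j) (t - s j) := by
  simp [lm, rdeg, h]

theorem lm_bot {K : Type*} [Field K] {ι ν : Type*} [Fintype ν]
    (s : ν → ℤ) (P : Matrix ι ν K[X]) (i : ι) 
    (h : rdegRow s (P i) = ⊥) : lm s P i = 0 := by
  ext j
  simp [lm, rdeg, h]

/-- Predictable degree property. -/
theorem predictable {K : Type*} [Field K] {ι ν : Type*} [Fintype ι] [Fintype ν]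
    (s : ν → ℤ) (B : Matrix ι ν K[X]) (hB : IsReducedForm s B) (w : ι → K[X]) (c : ℤ)
    (h : ∀ j, DB ((w ᵥ* B) j) (c - s j)) (k : ι) (hk : w k ≠ 0) (j : ν) :
    DB (B k j) (c - s j) := by
  classical
  have ht : ∀ i, ∃ t : ℤ, rdegRow s (B i) = (t : WithBot ℤ) := by
    intro i
    cases hr : rdegRow s (B i) with
    | bot => exact absurd (lm_bot s B i hr) (hB.ne_zero i)
    | coe t => exact ⟨t, rfl⟩
  choose t ht using ht
  have hD : ∀ i j, DB (B i j) (t i - s j) := fun i => (rdegRow_le s (B i) (t i)).mp (ht i).le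
  obtain ⟨k0, hk0, hmax⟩ := Finset.exists_max_image (Finset.univ.filter fun k => w k ≠ 0)
    (fun k => ((w k).natDegree : ℤ) + t k) ⟨k, by simp [hk]⟩
  simp only [Finset.mem_filter, Finset.mem_univ, true_and] at hk0 hmax
  set D := ((w k0).natDegree : ℤ) + t k0 with hDdef
  have hw : ∀ i, DB (w i) (D - t i) := by
    intro i
    by_cases hi : w i = 0
    · rw [hi]; exact DB_zero _
    · rw [DB_iff hi]; have := hmax i hi; omega
  have hDc : D ≤ c := by
    by_contra hc
    have hli := Fintype.linearIndependent_iff.mp hB (fun i => coeffZ (w i) (D - t i)) (by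
      ext j
      have h1 := coeffZ_of_DB (h j) (n := D - s j) (by omega)
      have h2 : (w ᵥ* B) j = ∑ i, w i * B i j := rfl
      rw [h2, coeffZ_sum] at h1
      refine Eq.trans ?_ h1
      rw [Finset.sum_apply]
      refine Finset.sum_congr rfl fun i _ => ?_
      change coeffZ (w i) (D - t i) * lm s B i j = _
      rw [lm_eq s B i j _ (ht i), ← coeffZ_mul (hw i) (hD i j)]
      congr 1; ring) k0
    have h3 : D - t k0 = ((w k0).natDegree : ℤ) := by omega
    simp only [h3, coeffZ_natDegree] at hli
    exact hk0 (leadingCoeff_eq_zero.mp hli)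
  have := hmax k hk
  exact DB_mono (hD k j) (by omega)

/-- Explicit form of square weak Popov matrices. -/
structure WP {K : Type*} [Field K] {m : ℕ} (s : Fin m → ℤ) (δ : Fin m → ℕ)
    (P : Matrix (Fin m) (Fin m) K[X]) : Prop where
  diag : ∀ i, (P i i).coeff (δ i) ≠ 0
  le : ∀ i j, DB (P i j) (δ i - s i + s j)
  lt : ∀ i j, i < j → DB (P i j) (δ i - s i + s j - 1)

theorem WP.high {K : Type*} [Field K] {m : ℕ} {s : Fin m → ℤ} {δ : Fin m → ℕ}
    {P : Matrix (Fin m) (Fin m) K[X]} (h : WP s δ P) (q : Fin m → K[X])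
    (hq : ∀ j, DB ((q ᵥ* P) j) (δ j - 1)) : q = 0 := by
  classical
  by_contra hne
  obtain ⟨k, hk⟩ := Function.ne_iff.mp hne
  obtain ⟨k0, hk0, hmax⟩ := Finset.exists_max_image (Finset.univ.filter fun k => q k ≠ 0)
    (fun k => toLex (((q k).natDegree : ℤ) + (δ k - s k), k)) ⟨k, by simpa using hk⟩
  simp only [Finset.mem_filter, Finset.mem_univ, true_and, Prod.Lex.toLex_le_toLex] at hk0 hmax
  set D := ((q k0).natDegree : ℤ) + (δ k0 - s k0) with hDdef
  have hw : ∀ i, DB (q i) (D - (δ i - s i)) := by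
    intro i
    by_cases hi : q i = 0
    · rw [hi]; exact DB_zero _
    · rw [DB_iff hi]; have := hmax i hi; omega
  have h1 := coeffZ_of_DB (hq k0) (n := D + s k0) (by omega)
  have h2 : (q ᵥ* P) k0 = ∑ i, q i * P i k0 := rfl
  rw [h2, coeffZ_sum, Finset.sum_eq_single k0] at h1
  · have h3 : D + s k0 = ((q k0).natDegree : ℤ) + (δ k0 : ℤ) := by omega
    rw [h3, coeffZ_mul ((DB_iff hk0 _).mpr le_rfl) (by simpa using h.le k0 k0),
      coeffZ_natDegree, coeffZ_natDegree] at h1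
    rcases mul_eq_zero.mp h1 with h4 | h4
    · exact hk0 (leadingCoeff_eq_zero.mp h4)
    · exact h.diag k0 h4
  · intro i _ hi
    have h3 : D + s k0 = (D - (δ i - s i)) + (δ i - s i + s k0) := by ring
    rw [h3, coeffZ_mul (hw i) (h.le i k0)]
    rcases lt_or_gt_of_ne hi with hlt | hgt
    · rw [coeffZ_of_DB (h.lt i k0 hlt) (by omega), mul_zero]
    · by_cases hqi : q i = 0
      · rw [hqi, coeffZ_zero, zero_mul]
      · rcases hmax i hqi with h5 | h5
        · rw [coeffZ_of_DB ((DB_iff hqi _).mpr le_rfl) (by omega), zero_mul]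
        · exact absurd h5.2 (not_le.mpr hgt)
  · simp

theorem piv_iff {K : Type*} [Field K] {ν : Type*} [Fintype ν] [LinearOrder ν]
    (s : ν → ℤ) (v : ν → K[X]) (j : ν) :
    piv s v = (j : WithBot ν) ↔ v j ≠ 0 ∧ (∀ k, DB (v k) ((v j).natDegree + s j - s k)) ∧
      ∀ k, j < k → DB (v k) ((v j).natDegree + s j - s k - 1) := by
  classical
  have key : ∀ j, v j ≠ 0 → degZ (v j) + (s j : WithBot ℤ) = 
      (((v j).natDegree + s j : ℤ) : WithBot ℤ) := by
    intro j hj; rw [degZ_ne hj, ← WithBot.coe_add]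
  constructor
  · intro h
    have hmem := Finset.mem_of_max h
    simp only [Finset.mem_filter, Finset.mem_univ, true_and] at hmem
    obtain ⟨hj, hr⟩ := hmem
    rw [key j hj] at hr
    have hle := (rdegRow_le s v _).mp hr.ge
    refine ⟨hj, hle, fun k hk => ?_⟩
    by_cases hvk : v k = 0
    · rw [hvk]; exact DB_zero _
    rw [DB_iff hvk]
    have h1 := hle k
    rw [DB_iff hvk] at h1
    by_contra hc
    have : k ≤ j := by
      have := Finset.le_max (s := Finset.univ.filter fun j => v j ≠ 0 ∧
        degZ (v j) + (s j : WithBot ℤ) = rdegRow s v) (a := k) (by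
          simp only [Finset.mem_filter, Finset.mem_univ, true_and]
          refine ⟨hvk, ?_⟩
          rw [key k hvk, ← hr]
          congr 1; omega)
      unfold piv at h
      rw [h] at this
      exact WithBot.coe_le_coe.mp this
    exact absurd hk (not_lt.mpr this)
  · rintro ⟨hj, hle, hlt⟩
    have hr : rdegRow s v = (((v j).natDegree + s j : ℤ) : WithBot ℤ) := by
      apply rdegRow_eq _ _ _ hle
      refine ⟨j, ?_⟩
      rw [add_sub_cancel_right, coeffZ_natDegree]
      exact fun h => hj (leadingCoeff_eq_zero.mp h)
    unfold piv
    apply le_antisymm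
    · apply Finset.max_le
      intro k hk
      simp only [Finset.mem_filter, Finset.mem_univ, true_and] at hk
      obtain ⟨hvk, hk⟩ := hk
      rw [key k hvk, hr] at hk
      have hk := WithBot.coe_inj.mp hk
      by_contra hc
      have h2 : j < k := not_le.mp (fun h => hc (WithBot.coe_le_coe.mpr h))
      have := (DB_iff hvk _).mp (hlt k h2)
      omega
    · apply Finset.le_max
      simp only [Finset.mem_filter, Finset.mem_univ, true_and]
      exact ⟨hj, by rw [key j hj, hr]⟩

theorem WP_of_weak {K : Type*} [Field K] {m : ℕ} (s : Fin m → ℤ) (δ : Fin m → ℕ)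
    (P : Matrix (Fin m) (Fin m) K[X]) (hP : IsWeakPopov (fun i => -s i) P)
    (hδ : ∀ i, pivDeg (fun j => -s j) (P i) = δ i) : WP s δ P := by
  obtain ⟨h1, h2⟩ := hP
  have : ∀ i, ∃ j : Fin m, piv (fun i => -s i) (P i) = (j : WithBot (Fin m)) := by
    intro i
    obtain ⟨j, hj⟩ := WithBot.ne_bot_iff_exists.mp (h1 i)
    exact ⟨j, hj.symm⟩
  choose f hf using this
  have hmono : StrictMono f := by
    intro a b hab
    have := h2 hab
    simp only [hf] at this
    exact WithBot.coe_lt_coe.mp this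
  have hid : f = id := by
    apply (StrictMono.range_inj hmono strictMono_id).mp
    rw [Set.range_id]
    exact (Finite.injective_iff_surjective.mp hmono.injective).range_eq
  have hf' : ∀ i, piv (fun i => -s i) (P i) = (i : WithBot (Fin m)) := by
    intro i; rw [hf, hid]; rfl
  have hd : ∀ i, (P i i).natDegree = δ i := by
    intro i
    rw [← hδ i]; simp [pivDeg, hf']
  have hp := fun i => (piv_iff _ _ _).mp (hf' i)
  refine ⟨fun i => ?_, fun i j => ?_, fun i j hij => ?_⟩
  · rw [← hd]; exact fun h => (hp i).1 (leadingCoeff_eq_zero.mp h)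
  · have := (hp i).2.1 j
    rw [hd] at this
    exact DB_mono this (by omega)
  · have := (hp i).2.2 j hij
    rw [hd] at this
    exact DB_mono this (by omega)

theorem WP.weak {K : Type*} [Field K] {m : ℕ} {s : Fin m → ℤ} {δ : Fin m → ℕ}
    {P : Matrix (Fin m) (Fin m) K[X]} (h : WP s δ P) (i : Fin m) :
    (P i i).natDegree = δ i ∧ piv (fun i => -s i) (P i) = (i : WithBot (Fin m)) := by
  have h0 : P i i ≠ 0 := fun h0 => h.diag i (by simp [h0])
  have hd : (P i i).natDegree = δ i := by
    apply le_antisymm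
    · have := (DB_iff h0 _).mp (h.le i i); omega
    · exact le_natDegree_of_ne_zero (h.diag i)
  refine ⟨hd, (piv_iff _ _ _).mpr ⟨h0, fun k => ?_, fun k hk => ?_⟩⟩
  · rw [hd]; exact DB_mono (h.le i k) (by omega)
  · rw [hd]; exact DB_mono (h.lt i k hk) (by omega)

/-- Integer encoding of the term order. -/
def key {m : ℕ} (s : Fin m → ℤ) (a : ℕ) (j : Fin m) : ℤ := m * (a - s j) + j

theorem key_inj {m : ℕ} (s : Fin m → ℤ) (a b : ℕ) (i j : Fin m) (h : key s a i = key s b j) :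
    a = b ∧ i = j := by
  unfold key at h
  have hi := i.2
  have hj := j.2
  have h0 : (a : ℤ) - s i = b - s j := by
    rcases lt_trichotomy ((a : ℤ) - s i) (b - s j) with h1 | h1 | h1
    · nlinarith
    · exact h1
    · nlinarith
  have h2 : i = j := by
    rw [h0] at h; apply Fin.ext; omega
  subst h2
  exact ⟨by omega, rfl⟩

theorem key_le {m : ℕ} (s : Fin m → ℤ) (a b : ℕ) (i j : Fin m) (h : key s a i ≤ key s b j) :
    (a : ℤ) - s i ≤ b - s j ∧ (j < i → (a : ℤ) - s i < b - s j) := by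
  unfold key at h
  have hi := i.2
  have hj := j.2
  have h0 : (a : ℤ) - s i ≤ b - s j := by
    by_contra hc
    push Not at hc
    nlinarith
  refine ⟨h0, fun hlt => ?_⟩
  have : (j : ℕ) < i := hlt
  by_contra hc
  have : (a : ℤ) - s i = b - s j := by omega
  rw [this] at h
  omega

theorem le_key {m : ℕ} (s : Fin m → ℤ) (a b : ℕ) (i j : Fin m) (h : (a : ℤ) - s i ≤ b - s j)
    (h2 : j < i → (a : ℤ) - s i < b - s j) : key s a i ≤ key s b j := by
  by_contra hc
  push Not at hc
  have h3 := key_le s b a j i hc.le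
  have h4 : (a : ℤ) - s i = b - s j := by omega
  have h5 : ¬ j < i := fun h => by have := h2 h; omega
  have h6 : ¬ i < j := fun h => by have := h3.2 h; omega
  have : i = j := le_antisymm (not_lt.mp h5) (not_lt.mp h6)
  subst this
  unfold key at hc
  rw [h4] at hc
  omega

theorem WP.key_le {K : Type*} [Field K] {m : ℕ} {s : Fin m → ℤ} {δ : Fin m → ℕ}
    {P : Matrix (Fin m) (Fin m) K[X]} (h : WP s δ P) (i j : Fin m) (n : ℕ)
    (hc : (P i j).coeff n ≠ 0) : key s n j ≤ key s (δ i) i := by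
  apply le_key
  · by_contra hh
    exact hc (h.le i j n (by omega))
  · intro hij
    by_contra hh
    exact hc (h.lt i j hij n (by omega))

theorem divide {K : Type*} [Field K] {m : ℕ} {s : Fin m → ℤ} {δ : Fin m → ℕ}
    {P : Matrix (Fin m) (Fin m) K[X]} (h : WP s δ P) (c : ℤ) (hc : ∀ a j, c ≤ key s a j) (n : ℕ) :
    ∀ v : Fin m → K[X], (∀ j a, (v j).coeff a ≠ 0 → key s a j < c + n) →
    ∃ q : Fin m → K[X], (∀ j a, (q j).coeff a ≠ 0 → key s (a + δ j) j < c + n) ∧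
      (∀ j a, δ j ≤ a → ((v - q ᵥ* P) j).coeff a = 0) ∧
      (∀ j a, ((v - q ᵥ* P) j).coeff a ≠ 0 → key s a j < c + n) := by
  induction n with
  | zero =>
    intro v hv
    have hv0 : v = 0 := by
      ext j a
      by_contra hne
      have := hv j a hne
      have := hc a j
      simp at *
      omega
    subst hv0
    exact ⟨0, by simp, by simp, by simp⟩
  | succ n ih =>
    intro v hv
    by_cases hex : ∃ j a, (v j).coeff a ≠ 0 ∧ key s a j = c + n
    · obtain ⟨j, a, hne, hk⟩ := hex
      have huniq : ∀ i b, key s b i = c + n → b = a ∧ i = j := fun i b hb =>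
        key_inj s b a i j (hb.trans hk.symm)
      by_cases had : δ j ≤ a
      · set μ : K[X] := monomial (a - δ j) ((v j).coeff a / (P j j).coeff (δ j)) with hμ
        have hcoef : ∀ i b, (μ * P j i).coeff b ≠ 0 → key s b i ≤ c + n := by
          intro i b hb
          rw [hμ, ← C_mul_X_pow_eq_monomial, mul_assoc, coeff_C_mul, coeff_X_pow_mul'] at hb
          split_ifs at hb with hle
          · have := h.key_le j i _ (right_ne_zero_of_mul hb)
            rw [← hk]
            unfold key at this ⊢
            push_cast [hle] at this
            have h3 : (m : ℤ) * (b - s i) = m * (((b : ℤ) - ((a - δ j : ℕ) : ℤ)) - s i) + m * ((a - δ j : ℕ) : ℤ) := by ring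
            have h4 : (m : ℤ) * (a - s j) = m * (δ j - s j) + m * ((a - δ j : ℕ) : ℤ) := by
              push_cast [had]; ring
            omega
          · simp at hb
        obtain ⟨q, h1, h2, h3⟩ := ih (v - fun i => μ * P j i) (by
          intro i b hb
          simp only [Pi.sub_apply, coeff_sub] at hb
          have hle : key s b i ≤ c + n := by
            by_cases hvb : (v i).coeff b = 0
            · rw [hvb, zero_sub, neg_ne_zero] at hb
              exact hcoef i b hb
            · have := hv i b hvb; push_cast at this; omega
          rcases hle.lt_or_eq with h5 | h5
          · exact h5
          · exfalso
            obtain ⟨rfl, rfl⟩ := huniq i b h5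
            apply hb
            rw [hμ, ← C_mul_X_pow_eq_monomial, mul_assoc, coeff_C_mul, coeff_X_pow_mul']
            rw [if_pos (by omega), Nat.sub_sub_self had, div_mul_cancel₀ _ (h.diag i), sub_self])
        have heq : v - (q + Pi.single j μ) ᵥ* P = (v - fun i => μ * P j i) - q ᵥ* P := by
          rw [Matrix.add_vecMul, Matrix.single_vecMul]
          ext1 i
          simp [Matrix.row]
          ring
        refine ⟨q + Pi.single j μ, ?_, ?_, ?_⟩
        · intro i b hb
          by_cases hqb : (q i).coeff b = 0
          · by_cases hij : i = j
            · subst hij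
              simp only [Pi.add_apply, Pi.single_eq_same, coeff_add, hqb, zero_add, hμ,
                coeff_monomial] at hb
              split_ifs at hb with hab
              · rw [← hab, Nat.sub_add_cancel had, hk]; push_cast; omega
              · simp at hb
            · simp [hij, hqb] at hb
          · have := h1 i b hqb; push_cast; omega
        · rw [heq]; exact h2
        · rw [heq]; intro i b hb; have := h3 i b hb; push_cast; omega
      · obtain ⟨q, h1, h2, h3⟩ := ih (v - Pi.single j (monomial a ((v j).coeff a))) (by
          intro i b hb
          simp only [Pi.sub_apply, coeff_sub] at hb
          have hle : key s b i ≤ c + n := by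
            by_cases hij : i = j
            · subst hij
              by_cases hab : a = b
              · subst hab; omega
              · have := hv i b (by simpa [coeff_monomial, hab] using hb); push_cast at this; omega
            · have := hv i b (by simpa [hij] using hb); push_cast at this; omega
          rcases hle.lt_or_eq with h5 | h5
          · exact h5
          · exfalso
            obtain ⟨rfl, rfl⟩ := huniq i b h5
            simp at hb)
        have heq : v - q ᵥ* P = (v - Pi.single j (monomial a ((v j).coeff a))) - q ᵥ* P
            + Pi.single j (monomial a ((v j).coeff a)) := by abel
        refine ⟨q, ?_, ?_, ?_⟩
        · intro i b hb; have := h1 i b hb; push_cast; omega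
        · intro i b hb
          rw [heq, Pi.add_apply, coeff_add, h2 i b hb, zero_add]
          by_cases hij : i = j
          · subst hij
            simp only [Pi.single_eq_same, coeff_monomial]
            rw [if_neg (by omega)]
          · simp [hij]
        · intro i b hb
          rw [heq, Pi.add_apply, coeff_add] at hb
          by_cases hr : (((v - Pi.single j (monomial a ((v j).coeff a))) - q ᵥ* P : Fin m → K[X]) i).coeff b = 0
          · rw [hr, zero_add] at hb
            by_cases hij : i = j
            · subst hij
              simp only [Pi.single_eq_same, coeff_monomial] at hb
              split_ifs at hb with hab
              · subst hab; rw [hk]; push_cast; omega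
              · simp at hb
            · simp [hij] at hb
          · have := h3 i b hr; push_cast; omega
    · push Not at hex
      obtain ⟨q, h1, h2, h3⟩ := ih v (by
        intro j a hja
        have h4 := hv j a hja
        have h5 := hex j a hja
        push_cast at h4
        omega)
      refine ⟨q, ?_, h2, ?_⟩
      · intro j a hja; have := h1 j a hja; push_cast; omega
      · intro j a hja; have := h3 j a hja; push_cast; omega

theorem exists_popov {K : Type*} [Field K] {m : ℕ} {s : Fin m → ℤ} {δ : Fin m → ℕ}
    {P : Matrix (Fin m) (Fin m) K[X]} (h : WP s δ P) (i : Fin m) :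
    ∃ q : Fin m → K[X], (∀ j, DB (q j) (δ i - s i + s j - δ j)) ∧
      (∀ j n, δ j ≤ n → ((q ᵥ* P) j).coeff n = if j = i ∧ n = δ i then 1 else 0) ∧
      (∀ j n, ((q ᵥ* P) j).coeff n ≠ 0 → key s n j ≤ key s (δ i) i) := by
  obtain ⟨c, hc⟩ : ∃ c, ∀ a j, c ≤ key s a j := by
    refine ⟨-(m * ∑ j, |s j|), fun a j => ?_⟩
    have h1 : |s j| ≤ ∑ j, |s j| :=
      Finset.single_le_sum (f := fun j => |s j|) (fun _ _ => abs_nonneg _) (Finset.mem_univ j)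
    have h2 := le_abs_self (s j)
    unfold key
    have : (0 : ℤ) ≤ m * (a - s j + ∑ j, |s j|) := mul_nonneg (by omega) (by omega)
    have h3 : (0 : ℤ) ≤ (j : ℕ) := by omega
    linarith
  have hci := hc (δ i) i
  have hN : c + ((key s (δ i) i - c + 1).toNat : ℤ) = key s (δ i) i + 1 := by omega
  obtain ⟨q, h1, h2, h3⟩ := divide h c hc (key s (δ i) i - c + 1).toNat
    (Pi.single i (X ^ δ i)) (by
      intro j a hja
      rw [hN]
      by_cases hij : j = i
      · subst hij
        simp only [Pi.single_eq_same, coeff_X_pow] at hja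
        split_ifs at hja with hab
        · subst hab; omega
        · simp at hja
      · simp [hij] at hja)
  rw [hN] at h1 h3
  refine ⟨q, ?_, ?_, ?_⟩
  · intro j n hn
    by_contra hne
    have := (_root_.key_le s _ _ _ _ (Int.lt_add_one_iff.mp (h1 j n hne))).1
    push_cast at this
    omega
  · intro j n hn
    have := h2 j n hn
    rw [Pi.sub_apply, coeff_sub, sub_eq_zero] at this
    rw [← this]
    by_cases hij : j = i
    · subst hij; simp [coeff_X_pow]
    · simp [hij]
  · intro j n hne
    by_cases hjn : j = i ∧ n = δ i
    · rw [hjn.1, hjn.2]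
    · apply Int.lt_add_one_iff.mp (h3 j n _)
      rw [Pi.sub_apply, coeff_sub]
      have : (Pi.single i (X ^ δ i) : Fin m → K[X]) j = if j = i then X ^ δ i else 0 := by
        by_cases hij : j = i
        · subst hij; simp
        · simp [hij]
      rw [this]
      by_cases hij : j = i
      · rw [if_pos hij, coeff_X_pow, if_neg (fun hh => hjn ⟨hij, hh⟩)]
        simpa using hne
      · simpa [hij] using hne

theorem mem_ker {K : Type*} [Field K] {m : ℕ} (P : Matrix (Fin m) (Fin m) K[X])
    (u r : Fin m → K[X]) :
    Fin.append u r ∈ leftKernel ((Matrix.fromRows P (-1)).submatrix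
      (⇑(finSumFinEquiv (m := m) (n := m)).symm) id) ↔ u ᵥ* P = r := by
  unfold leftKernel
  rw [LinearMap.mem_ker, Matrix.vecMulLinear_apply, ← sub_eq_zero (b := r)]
  have : Fin.append u r ᵥ* ((Matrix.fromRows P (-1)).submatrix
      (⇑(finSumFinEquiv (m := m) (n := m)).symm) id) = u ᵥ* P - r := by
    ext1 j
    simp only [Matrix.vecMul, dotProduct, Fin.sum_univ_add]
    simp only [Fin.append_left, Fin.append_right, Matrix.submatrix_apply,
      finSumFinEquiv_symm_apply_castAdd, finSumFinEquiv_symm_apply_natAdd,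
      Matrix.fromRows_apply_inl, Matrix.fromRows_apply_inr]
    simp [Matrix.one_apply, sub_eq_add_neg, Matrix.vecMul, dotProduct]
  rw [this]

theorem sum_smul_append {K : Type*} [Field K] {m : ℕ} (U R : Matrix (Fin m) (Fin m) K[X])
    (w : Fin m → K[X]) :
    ∑ i, w i • (Fin.append (U i) (R i)) = Fin.append (w ᵥ* U) (w ᵥ* R) := by
  ext1 j
  refine Fin.addCases (fun k => ?_) (fun k => ?_) j
  · simp [Matrix.vecMul, dotProduct]
  · simp only [Finset.sum_apply, Pi.smul_apply, Fin.append_right]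
    simp [Matrix.vecMul, dotProduct]

theorem mem_rowSpace {K : Type*} [Field K] {m : ℕ} (P : Matrix (Fin m) (Fin m) K[X])
    (v : Fin m → K[X]) : v ∈ rowSpace P ↔ ∃ w : Fin m → K[X], w ᵥ* P = v := by
  unfold rowSpace
  rw [Submodule.mem_span_range_iff_exists_fun]
  have : ∀ w : Fin m → K[X], ∑ i, w i • P i = w ᵥ* P := fun w => (Matrix.vecMul_eq_sum w P).symm
  simp only [this]

theorem basis_iff {K : Type*} [Field K] {m : ℕ} (B P : Matrix (Fin m) (Fin m) K[X])
    (h1 : ∀ w, w ᵥ* B = 0 → w = 0) (h2 : ∀ w, ∃ w', w ᵥ* B = w' ᵥ* P)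
    (h3 : ∀ w, ∃ w', w ᵥ* P = w' ᵥ* B) : IsBasisOf B (rowSpace P) := by
  refine ⟨?_, ?_⟩
  · rw [Fintype.linearIndependent_iff]
    intro g hg
    have := h1 g (by rw [Matrix.vecMul_eq_sum]; exact hg)
    intro i; rw [this]; rfl
  · change rowSpace B = rowSpace P
    ext v
    rw [mem_rowSpace, mem_rowSpace]
    constructor
    · rintro ⟨w, rfl⟩
      obtain ⟨w', hw⟩ := h2 w
      exact ⟨w', hw.symm⟩
    · rintro ⟨w, rfl⟩
      obtain ⟨w', hw⟩ := h3 w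
      exact ⟨w', hw.symm⟩

/-- Corollary 5.2: with the setup of Lemma 5.1, if
`[Ũ R̃]` is a `(−d)`-reduced basis of the left kernel of `F = [P; −I]`, then
`R̃` is a `(−δ)`-reduced form of `P`, `lm_{−δ}(R̃)` is invertible, and
`lm_{−δ}(R̃)⁻¹ · R̃` is the `(−s)`-Popov form of `P`. -/
theorem normalize_popov {K : Type*} [Field K] {m : ℕ}
    (s : Fin m → ℤ) (P : Matrix (Fin m) (Fin m) K[X])
    (hP : IsWeakPopov (fun i => -s i) P)
    (δ : Fin m → ℕ) (hδ : ∀ i, pivDeg (fun j => -s j) (P i) = δ i)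
    (hsδ : ∀ i, (δ i : ℤ) ≤ s i)
    (Ut Rt : Matrix (Fin m) (Fin m) K[X]) :
    let d : Fin (m + m) → ℤ := Fin.append (fun i => s i - δ i) (fun i => (δ i : ℤ))
    let F : Matrix (Fin (m + m)) (Fin m) K[X] :=
      (Matrix.fromRows P (-1)).submatrix (⇑(finSumFinEquiv (m := m) (n := m)).symm) id
    let URt : Matrix (Fin m) (Fin (m + m)) K[X] := Matrix.of fun i => Fin.append (Ut i) (Rt i)
    IsBasisOf URt (leftKernel F) →
    IsReducedForm (fun c => -d c) URt →
    (IsBasisOf Rt (rowSpace P) ∧ IsReducedForm (fun i => -(δ i : ℤ)) Rt) ∧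
    IsUnit (lm (fun i => -(δ i : ℤ)) Rt).det ∧
    (IsBasisOf (((lm (fun i => -(δ i : ℤ)) Rt)⁻¹).map Polynomial.C * Rt) (rowSpace P) ∧
      IsPopov (fun i => -s i) (((lm (fun i => -(δ i : ℤ)) Rt)⁻¹).map Polynomial.C * Rt)) := by
  intro d F URt hbas hred
  have hWP := WP_of_weak s δ P hP hδ
  obtain ⟨hli, hspan⟩ := hbas
  have hUR : ∀ i, Ut i ᵥ* P = Rt i := by
    intro i
    rw [← mem_ker]
    change Fin.append (Ut i) (Rt i) ∈ leftKernel F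
    rw [← hspan]
    exact Submodule.subset_span ⟨i, rfl⟩
  have hURm : ∀ w, w ᵥ* Rt = (w ᵥ* Ut) ᵥ* P := by
    intro w
    have : Rt = Ut * P := by
      ext1 i j
      rw [← hUR i]
      rfl
    rw [this, Matrix.vecMul_vecMul]
  have hrep : ∀ q, ∃ w, w ᵥ* Ut = q := by
    intro q
    have h1 : Fin.append q (q ᵥ* P) ∈ leftKernel F := (mem_ker P q _).mpr rfl
    rw [← hspan, Submodule.mem_span_range_iff_exists_fun] at h1
    obtain ⟨w, hw⟩ := h1
    have h2 := (sum_smul_append Ut Rt w).symm.trans hw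
    refine ⟨w, ?_⟩
    ext1 j
    have := congrFun h2 (Fin.castAdd m j)
    simpa using this
  have hPinj : ∀ q, q ᵥ* P = 0 → q = 0 := fun q hq => hWP.high q (by
    intro j; rw [hq]; exact DB_zero _)
  have hRtinj : ∀ w, w ᵥ* Rt = 0 → w = 0 := by
    intro w hw
    have h1 := hPinj _ ((hURm w).symm.trans hw)
    have h2 := Fintype.linearIndependent_iff.mp hli w (by
      refine (sum_smul_append Ut Rt w).trans ?_
      rw [hw, h1]
      ext1 j
      refine Fin.addCases (fun k => ?_) (fun k => ?_) j
      · simp only [Fin.append_left]; rfl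
      · simp only [Fin.append_right]; rfl)
    ext1 i; exact h2 i
  have hbasRt : IsBasisOf Rt (rowSpace P) := by
    refine basis_iff Rt P hRtinj (fun w => ⟨_, hURm w⟩) (fun w => ?_)
    obtain ⟨w', hw'⟩ := hrep w
    exact ⟨w', by rw [hURm, hw']⟩
  choose U hU1 hU2 hU3 using exists_popov hWP
  set R : Matrix (Fin m) (Fin m) K[X] := fun i => U i ᵥ* P with hR
  have hRDB : ∀ i j, DB (R i j) (δ j) := by
    intro i j n hn
    have := hU2 i j n (by omega)
    rw [if_neg (by rintro ⟨rfl, h⟩; omega)] at this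
    exact this
  have hRtop : ∀ i j, (R i j).coeff (δ j) = (1 : Matrix (Fin m) (Fin m) K) i j := by
    intro i j
    have := hU2 i j (δ j) le_rfl
    refine this.trans ?_
    rw [Matrix.one_apply]
    by_cases hij : i = j
    · subst hij; simp
    · rw [if_neg (fun h => hij h.1.symm), if_neg hij]
  have hRWP : WP s δ R := by
    refine ⟨fun i => by simp [hRtop], fun i j n hn => ?_, fun i j hij n hn => ?_⟩
    · by_contra hne
      have := (key_le s _ _ _ _ (hU3 i j n hne)).1
      omega
    · by_contra hne
      have := (key_le s _ _ _ _ (hU3 i j n hne)).2 hij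
      omega
  have hRinj : ∀ q, q ᵥ* R = 0 → q = 0 := fun q hq => hRWP.high q (by
    intro j; rw [hq]; exact DB_zero _)
  choose W hW using fun i => hrep (U i)
  have hWR : ∀ i, W i ᵥ* Rt = R i := by
    intro i; rw [hURm, hW]
  have hRtDB : ∀ k j, DB (Rt k j) (δ j) := by
    intro k j
    have hex : ∃ i, W i k ≠ 0 := by
      by_contra hno
      push Not at hno
      have hdet : Matrix.det (Matrix.of W) = 0 := Matrix.det_eq_zero_of_column_eq_zero k hno
      obtain ⟨v, hv, hv0⟩ := Matrix.exists_vecMul_eq_zero_iff.mpr hdet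
      apply hv
      apply hRinj
      have : R = Matrix.of W * Rt := by
        ext1 i j; rw [← hWR i]; rfl
      rw [this, ← Matrix.vecMul_vecMul, hv0, Matrix.zero_vecMul]
    obtain ⟨i, hi⟩ := hex
    have hvec : W i ᵥ* URt = Fin.append (U i) (R i) := by
      rw [Matrix.vecMul_eq_sum, ← hWR i, ← hW i]
      exact sum_smul_append Ut Rt (W i)
    have := predictable _ URt hred (W i) 0 (by
      rw [hvec]
      intro c
      refine Fin.addCases (fun c => ?_) (fun c => ?_) c
      · simp only [d, Fin.append_left]
        have := hsδ i
        exact DB_mono (hU1 i c) (by omega)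
      · simp only [d, Fin.append_right]
        exact DB_mono (hRDB i c) (by omega)) k hi (Fin.natAdd m j)
    simp only [d, URt, Matrix.of_apply, Fin.append_right] at this
    exact DB_mono this (by omega)
  set V : Matrix (Fin m) (Fin m) K := Matrix.of fun i j => (Rt i j).coeff (δ j) with hV
  have hRtV : Rt = V.map C * R := by
    have hz : ∀ i, Ut i - (V.map C * Matrix.of U) i = 0 := by
      intro i
      apply hWP.high
      intro j
      have h1 : ((Ut i - (V.map C * Matrix.of U) i) ᵥ* P) j = Rt i j - (V.map C * R) i j := by
        rw [Matrix.sub_vecMul, hUR]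
        have h2 : R = Matrix.of U * P := by ext1 a b; rfl
        rw [h2, ← Matrix.mul_assoc]
        rfl
      rw [h1]
      intro n hn
      rw [coeff_sub, Matrix.mul_apply, finsetSum_coeff]
      simp only [Matrix.map_apply, coeff_C_mul]
      rcases (show δ j ≤ n by omega).eq_or_lt with h2 | h2
      · subst h2
        simp [hRtop, Matrix.one_apply, hV]
      · rw [hRtDB i j n (by omega)]
        rw [Finset.sum_eq_zero, sub_zero]
        intro k _
        rw [hRDB k j n (by omega), mul_zero]
    ext1 i j
    have h3 : Ut i = (V.map C * Matrix.of U) i := sub_eq_zero.mp (hz i)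
    have h2 : R = Matrix.of U * P := by ext1 a b; rfl
    rw [h2, ← Matrix.mul_assoc, ← hUR i, h3]
    rfl
  have hVinj : ∀ v : Fin m → K, v ᵥ* V = 0 → v = 0 := by
    intro v hv
    have h1 : (fun i => C (v i)) ᵥ* V.map C = 0 := by
      ext1 j
      have := congrArg C (congrFun hv j)
      simpa [Matrix.vecMul, dotProduct] using this
    have := hRtinj (fun i => C (v i)) (by
      rw [hRtV, ← Matrix.vecMul_vecMul, h1, Matrix.zero_vecMul])
    ext1 i
    simpa using congrFun this i
  have hVdet : V.det ≠ 0 := by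
    intro h0
    obtain ⟨v, hv, hv0⟩ := Matrix.exists_vecMul_eq_zero_iff.mpr h0
    exact hv (hVinj v hv0)
  have hlm : lm (fun i => -(δ i : ℤ)) Rt = V := by
    ext1 i j
    have hr : rdegRow (fun i => -(δ i : ℤ)) (Rt i) = ((0 : ℤ) : WithBot ℤ) := by
      apply rdegRow_eq
      · intro j; exact DB_mono (hRtDB i j) (by omega)
      · by_contra hno
        push Not at hno
        apply hVdet
        apply Matrix.det_eq_zero_of_row_eq_zero i
        intro j
        have := hno j
        rw [zero_sub, neg_neg, coeffZ_natDegree] at this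
        exact this
    rw [lm_eq _ _ _ _ _ hr, zero_sub, neg_neg, coeffZ_natDegree]
    rfl
  have hunit : IsUnit V.det := isUnit_iff_ne_zero.mpr hVdet
  have hfin : (V⁻¹).map C * Rt = R := by
    rw [hRtV, ← Matrix.mul_assoc, ← Matrix.map_mul, Matrix.nonsing_inv_mul _ hunit]
    simp
  refine ⟨⟨hbasRt, ?_⟩, ?_, ?_⟩
  · unfold IsReducedForm
    rw [hlm, Fintype.linearIndependent_iff]
    intro g hg
    have := hVinj g (by rw [Matrix.vecMul_eq_sum]; exact hg)
    intro i; rw [this]; rfl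
  · rw [hlm]; exact hunit
  · rw [hlm, hfin]
    refine ⟨?_, ⟨fun i => ?_, ?_⟩, ?_⟩
    · refine basis_iff R P hRinj (fun w => ⟨w ᵥ* Matrix.of U, ?_⟩) (fun w => ?_)
      · rw [Matrix.vecMul_vecMul]; rfl
      · obtain ⟨w', hw'⟩ := hrep w
        refine ⟨w' ᵥ* V.map C, ?_⟩
        rw [Matrix.vecMul_vecMul, ← hRtV, hURm, hw']
    · rw [(hRWP.weak i).2]; exact WithBot.coe_ne_bot
    · intro a b hab
      simp only [(hRWP.weak _).2]
      exact WithBot.coe_lt_coe.mpr hab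
    · intro i j hij
      rw [(hRWP.weak i).2] at hij
      have hij := WithBot.coe_inj.mp hij
      subst hij
      have hnd := (hRWP.weak i).1
      have hmon : (R i i).Monic := by
        rw [Monic, leadingCoeff, hnd, hRtop]; simp
      refine ⟨hmon, fun i' hi' => ?_⟩
      rw [degree_eq_natDegree hmon.ne_zero, hnd, degree_lt_iff_coeff_zero]
      intro n hn
      have := hU2 i' i n hn
      rw [if_neg (fun h => hi' h.1.symm)] at this
      exact this
end

section
/- Let K be a field, fix s = (s_1,…,s_m) ∈ ℕ^m and δ ∈ ℤ_{>0}, with the associated α_j, β_j, m̄, expansion-compression matrix E and expanded shift s̄ as in the column partial linearization, and let Z ∈ K[x]^{(m̄−m)×m̄} be the block diagonal matrix diag(Z_1,…,Z_m) where Z_j ∈ K[x]^{(α_j−1)×α_j} has x^δ on the diagonal, −1 on the superdiagonal and zeros elsewhere. Then Z is the unique basis of the left kernel of E which is in 0-Popov form; moreover Z is also in −s̄-Popov form, rdeg_{−s̄}(Z) = 0, and the −s̄-pivot profile of Z is the list of pairs (α_1+⋯+α_{j−1}+i, δ) for 1 ≤ j ≤ m and 1 ≤ i ≤ α_j − 1.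 -/
open Polynomial Matrix

/-! ### Column partial linearization (Definition 5.3) -/

/-- Number of parts `α_j = ⌈s_j/δ⌉` (with `α_j = 1` when `s_j = 0`). -/
def cplα (δ : ℕ) {m : ℕ} (s : Fin m → ℕ) (j : Fin m) : ℕ :=
  max 1 ((s j + δ - 1) / δ)

/-- Remainder `β_j` so that `s_j = (α_j − 1)δ + β_j`. -/
def cplβ (δ : ℕ) {m : ℕ} (s : Fin m → ℕ) (j : Fin m) : ℕ :=
  s j - (cplα δ s j - 1) * δ

/-- Index set of the expanded columns: pairs `(j, i)` with `0 ≤ i < α_j`,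
ordered lexicographically (this corresponds to `α_1 + ⋯ + α_{j-1} + i`). -/
abbrev CplIdx (δ : ℕ) {m : ℕ} (s : Fin m → ℕ) := Lex ((j : Fin m) × Fin (cplα δ s j))

/-- The expansion-compression matrix `E`: block diagonal with `j`-th block the
column `(1, x^δ, …, x^{(α_j−1)δ})ᵀ`. -/
noncomputable def cplE (K : Type*) [Field K] (δ : ℕ) {m : ℕ} (s : Fin m → ℕ) :
    Matrix (CplIdx δ s) (Fin m) K[X] :=
  Matrix.of fun c j =>
    if (ofLex c).1 = j then (Polynomial.X : K[X]) ^ (((ofLex c).2 : ℕ) * δ) else 0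

/-- The expanded shift `s̄`: within block `j`, `δ` everywhere except `β_j` at
the last position. -/
def cplShift (δ : ℕ) {m : ℕ} (s : Fin m → ℕ) (c : CplIdx δ s) : ℕ :=
  if ((ofLex c).2 : ℕ) = cplα δ s (ofLex c).1 - 1 then cplβ δ s (ofLex c).1 else δ

/-- The block diagonal matrix `Z = diag(Z_1,…,Z_m)` with
`Z_j ∈ K[x]^{(α_j−1)×α_j}` having `x^δ` on the diagonal and `−1` on the
superdiagonal. -/
noncomputable def cplZ (K : Type*) [Field K] (δ : ℕ) {m : ℕ} (s : Fin m → ℕ) :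
    Matrix (Lex ((j : Fin m) × Fin (cplα δ s j - 1))) (CplIdx δ s) K[X] :=
  Matrix.of fun r c =>
    if (ofLex r).1 = (ofLex c).1 then
      (if ((ofLex c).2 : ℕ) = ((ofLex r).2 : ℕ) then (Polynomial.X : K[X]) ^ δ
       else if ((ofLex c).2 : ℕ) = ((ofLex r).2 : ℕ) + 1 then -1 else 0)
    else 0

section Helpers

theorem cpl_degZ_lt {K : Type*} [Field K] {p q : K[X]} : degZ p < degZ q ↔ p.degree < q.degree := by
  unfold degZ
  cases p.degree <;> cases q.degree <;> simp [WithBot.map_bot, WithBot.map_coe, -WithBot.map_eq_bot_iff]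

theorem cpl_degZ_le {K : Type*} [Field K] {p q : K[X]} : degZ p ≤ degZ q ↔ p.degree ≤ q.degree := by
  rw [← not_lt, cpl_degZ_lt, not_lt]

theorem cpl_piv_eq {K : Type*} [Field K] {ν : Type*} [Fintype ν] [LinearOrder ν]
    (s : ν → ℤ) (v : ν → K[X]) (j : ν) (h0 : v j ≠ 0)
    (h1 : ∀ k, degZ (v k) + (s k : WithBot ℤ) ≤ degZ (v j) + (s j : WithBot ℤ))
    (h2 : ∀ k, j < k → degZ (v k) + (s k : WithBot ℤ) < degZ (v j) + (s j : WithBot ℤ)) :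
    rdegRow s v = degZ (v j) + (s j : WithBot ℤ) ∧ piv s v = (j : WithBot ν) := by
  classical
  have hr : rdegRow s v = degZ (v j) + (s j : WithBot ℤ) := by
    apply le_antisymm
    · exact Finset.sup_le fun k _ => h1 k
    · exact Finset.le_sup (f := fun j => degZ (v j) + (s j : WithBot ℤ)) (Finset.mem_univ j)
  refine ⟨hr, ?_⟩
  unfold piv
  apply le_antisymm
  · apply Finset.max_le
    intro k hk
    replace hk := (Finset.mem_filter.mp hk)
    rw [hr] at hk
    rw [WithBot.coe_le_coe]
    by_contra hc
    exact (h2 k (not_le.mp hc)).ne hk.2.2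
  · apply Finset.le_max
    simp [h0, hr]

/-- zero-shift pivot predicate -/
def CplPivAt {K : Type*} [Field K] {ν : Type*} [LinearOrder ν] (v : ν → K[X]) (j : ν) : Prop :=
  v j ≠ 0 ∧ (∀ k, (v k).degree ≤ (v j).degree) ∧ ∀ k, j < k → (v k).degree < (v j).degree

theorem cpl_piv_zero {K : Type*} [Field K] {ν : Type*} [Fintype ν] [LinearOrder ν]
    (v : ν → K[X]) (j : ν) (h : CplPivAt v j) : piv (fun _ => (0:ℤ)) v = (j : WithBot ν) := by
  refine (cpl_piv_eq _ v j h.1 ?_ ?_).2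
  · intro k; simpa [cpl_degZ_le] using h.2.1 k
  · intro k hk; simpa [cpl_degZ_lt] using h.2.2 k hk

theorem cpl_piv_zero_conv {K : Type*} [Field K] {ν : Type*} [Fintype ν] [LinearOrder ν]
    (v : ν → K[X]) (j : ν) (h : piv (fun _ => (0:ℤ)) v = (j : WithBot ν)) : CplPivAt v j := by
  classical
  have hm := Finset.mem_of_max h
  obtain ⟨-, h0, hr⟩ := Finset.mem_filter.mp hm
  have hle : ∀ k, (v k).degree ≤ (v j).degree := by
    intro k
    have := Finset.le_sup (f := fun j => degZ (v j) + ((0:ℤ) : WithBot ℤ)) (Finset.mem_univ k)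
    change _ ≤ rdegRow (fun _ => (0:ℤ)) v at this
    rw [← hr] at this
    simpa [cpl_degZ_le] using this
  refine ⟨h0, hle, fun k hk => lt_of_le_of_ne (hle k) fun he => ?_⟩
  have hk' : (k : WithBot ν) ≤ piv (fun _ => (0:ℤ)) v := by
    unfold piv
    apply Finset.le_max
    refine Finset.mem_filter.mpr ⟨Finset.mem_univ _, ?_, ?_⟩
    · intro hz; rw [hz, degree_zero] at he
      exact h0 (degree_eq_bot.mp he.symm)
    · rw [← hr]; simp [degZ, he]
  rw [h, WithBot.coe_le_coe] at hk'
  exact absurd hk (not_lt.mpr hk')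

theorem cpl_key {K : Type*} [Field K] {ι ν : Type*} [Fintype ι] [LinearOrder ν]
    (P : ι → ν → K[X]) (π : ι → ν) (hπ : Function.Injective π) (hP : ∀ i, CplPivAt (P i) (π i))
    (u : ι → K[X]) (hu : u ≠ 0) :
    ∃ i, CplPivAt (∑ k, u k • P k) (π i) ∧
      (P i (π i)).degree ≤ ((∑ k, u k • P k) (π i)).degree := by
  classical
  obtain ⟨i0, hi0⟩ : ∃ i, u i ≠ 0 := by
    by_contra h; push Not at h; exact hu (funext h)
  obtain ⟨i, hi, hmax⟩ := Finset.exists_max_image (Finset.univ.filter fun i => u i ≠ 0)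
    (fun i => toLex ((u i).degree + (P i (π i)).degree, π i)) ⟨i0, by simp [hi0]⟩
  simp only [Finset.mem_filter, Finset.mem_univ, true_and, Prod.Lex.le_iff] at hi hmax
  set D := (u i).degree + (P i (π i)).degree with hD
  have hDbot : ⊥ < D := by
    rw [hD, ← degree_mul, bot_lt_iff_ne_bot, Ne, degree_eq_bot]
    exact mul_ne_zero hi (hP i).1
  -- each term has degree ≤ D
  have hle : ∀ k c, (u k * P k c).degree ≤ D := by
    intro k c
    by_cases hk : u k = 0
    · simp [hk]
    rw [degree_mul]
    refine (add_le_add_right ((hP k).2.1 c) _).trans ?_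
    rcases hmax k hk with h | h
    · exact h.le
    · exact h.1.le
  have hlt1 : ∀ k c, π i < c → (u k * P k c).degree < D := by
    intro k c hc
    by_cases hk : u k = 0
    · simpa [hk] using hDbot
    rcases hmax k hk with h | h
    · rw [degree_mul]
      exact (add_le_add_right ((hP k).2.1 c) _).trans_lt h
    · have h1 : (u k).degree + (P k (π k)).degree = D := h.1
      have h2 : π k ≤ π i := h.2
      rw [degree_mul, ← h1]
      exact WithBot.add_lt_add_left (by simpa [degree_eq_bot] using hk)
        ((hP k).2.2 c (h2.trans_lt hc))
  have hlt2 : ∀ k, k ≠ i → (u k * P k (π i)).degree < D := by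
    intro k hki
    by_cases hk : u k = 0
    · simpa [hk] using hDbot
    rcases hmax k hk with h | h
    · rw [degree_mul]
      exact (add_le_add_right ((hP k).2.1 _) _).trans_lt h
    · have h1 : (u k).degree + (P k (π k)).degree = D := h.1
      have h2 : π k ≤ π i := h.2
      rw [degree_mul, ← h1]
      exact WithBot.add_lt_add_left (by simpa [degree_eq_bot] using hk)
        ((hP k).2.2 _ (lt_of_le_of_ne h2 (fun e => hki (hπ e))))
  have happ : ∀ c, (∑ k, u k • P k) c = ∑ k, u k * P k c := by
    intro c; simp [Finset.sum_apply]
  have hpi : ((∑ k, u k • P k) (π i)).degree = D := by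
    rw [happ, ← Finset.add_sum_erase _ _ (Finset.mem_univ i), degree_add_eq_left_of_degree_lt,
      degree_mul]
    rw [degree_mul]
    refine (degree_sum_le _ _).trans_lt ?_
    rw [Finset.sup_lt_iff hDbot]
    intro k hk
    exact hlt2 k (Finset.ne_of_mem_erase hk)
  refine ⟨i, ⟨?_, ?_, ?_⟩, ?_⟩
  · intro h; rw [h, degree_zero] at hpi; exact hDbot.ne hpi
  · intro c
    rw [hpi, happ]
    exact (degree_sum_le _ _).trans (Finset.sup_le fun k _ => hle k c)
  · intro c hc
    rw [hpi, happ]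
    refine (degree_sum_le _ _).trans_lt ?_
    rw [Finset.sup_lt_iff hDbot]
    exact fun k _ => hlt1 k c hc
  · rw [hpi, hD]
    have : (0 : WithBot ℕ) ≤ (u i).degree := zero_le_degree_iff.mpr hi
    simpa using add_le_add_left this (P i (π i)).degree

theorem cpl_key_span {K : Type*} [Field K] {ι ν : Type*} [Fintype ι] [LinearOrder ν]
    (P : ι → ν → K[X]) (π : ι → ν) (hπ : Function.Injective π) (hP : ∀ i, CplPivAt (P i) (π i))
    (v : ν → K[X]) (hv : v ∈ Submodule.span K[X] (Set.range P)) (hv0 : v ≠ 0) :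
    ∃ i, CplPivAt v (π i) ∧ (P i (π i)).degree ≤ (v (π i)).degree := by
  obtain ⟨u, rfl⟩ := (Submodule.mem_span_range_iff_exists_fun _).mp hv
  exact cpl_key P π hπ hP u (by rintro rfl; simp at hv0)

theorem cpl_linInd {K : Type*} [Field K] {ι ν : Type*} [Fintype ι] [LinearOrder ν]
    (P : ι → ν → K[X]) (π : ι → ν) (hπ : Function.Injective π) (hP : ∀ i, CplPivAt (P i) (π i)) :
    LinearIndependent K[X] P := by
  rw [Fintype.linearIndependent_iff]
  intro u h
  by_contra hc
  obtain ⟨i, hi, -⟩ := cpl_key P π hπ hP u (by rintro rfl; simp at hc)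
  rw [h] at hi
  exact hi.1 rfl

theorem cpl_pivAt_unique {K : Type*} [Field K] {ν : Type*} [LinearOrder ν] {v : ν → K[X]} {j k : ν}
    (hj : CplPivAt v j) (hk : CplPivAt v k) : j = k := by
  rcases lt_trichotomy j k with h | h | h
  · exact absurd (hj.2.2 k h) (not_lt.mpr (hk.2.1 j))
  · exact h
  · exact absurd (hk.2.2 j h) (not_lt.mpr (hj.2.1 k))

theorem cpl_popov_data {K : Type*} [Field K] {ι ν : Type*} [Fintype ν] [LinearOrder ν] [LinearOrder ι]
    (P : Matrix ι ν K[X]) (h : IsPopov (fun _ => (0 : ℤ)) P) :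
    ∃ π : ι → ν, StrictMono π ∧ (∀ i, CplPivAt (P i) (π i)) ∧ (∀ i, (P i (π i)).Monic) ∧
      ∀ i i', i' ≠ i → (P i' (π i)).degree < (P i (π i)).degree := by
  obtain ⟨⟨h1, h2⟩, h3⟩ := h
  have : ∀ i, ∃ j : ν, piv (fun _ => (0:ℤ)) (P i) = (j : WithBot ν) := fun i => by
    obtain ⟨j, hj⟩ := WithBot.ne_bot_iff_exists.mp (h1 i)
    exact ⟨j, hj.symm⟩
  choose π hπ using this
  refine ⟨π, fun a b hab => ?_, fun i => cpl_piv_zero_conv _ _ (hπ i), fun i => (h3 i _ (hπ i)).1,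
    fun i => (h3 i _ (hπ i)).2⟩
  have := h2 hab
  simpa [hπ] using this

theorem cpl_popov_unique {K : Type*} [Field K] {ι ν : Type*} [Fintype ν] [LinearOrder ν]
    [Fintype ι] [LinearOrder ι] (P Q : Matrix ι ν K[X])
    (hP : IsPopov (fun _ => (0 : ℤ)) P) (hQ : IsPopov (fun _ => (0 : ℤ)) Q)
    (hs : Submodule.span K[X] (Set.range fun i => P i) = Submodule.span K[X] (Set.range fun i => Q i)) :
    P = Q := by
  obtain ⟨π, hm, hp, hmon, hcol⟩ := cpl_popov_data P hP
  obtain ⟨ρ, hm', hp', hmon', hcol'⟩ := cpl_popov_data Q hQ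
  have memP : ∀ i, P i ∈ Submodule.span K[X] (Set.range fun i => P i) :=
    fun i => Submodule.subset_span ⟨i, rfl⟩
  have memQ : ∀ i, Q i ∈ Submodule.span K[X] (Set.range fun i => P i) :=
    fun i => hs ▸ Submodule.subset_span ⟨i, rfl⟩
  have hne : ∀ {v : ν → K[X]} {j}, CplPivAt v j → v ≠ 0 := by
    rintro v j h rfl; exact h.1 rfl
  have A : ∀ i, ∃ k, π i = ρ k ∧ (Q k (ρ k)).degree ≤ (P i (π i)).degree := by
    intro i
    obtain ⟨k, hk, hd⟩ := cpl_key_span Q ρ hm'.injective hp' (P i) (hs ▸ memP i) (hne (hp i))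
    have := cpl_pivAt_unique (hp i) hk
    exact ⟨k, this, this ▸ hd⟩
  have B : ∀ i, ∃ k, ρ i = π k ∧ (P k (π k)).degree ≤ (Q i (ρ i)).degree := by
    intro i
    obtain ⟨k, hk, hd⟩ := cpl_key_span P π hm.injective hp (Q i) (memQ i) (hne (hp' i))
    have := cpl_pivAt_unique (hp' i) hk
    exact ⟨k, this, this ▸ hd⟩
  have hπρ : π = ρ := by
    apply (StrictMono.range_inj hm hm').mp
    ext x
    constructor
    · rintro ⟨i, rfl⟩; obtain ⟨k, hk, -⟩ := A i; exact ⟨k, hk.symm⟩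
    · rintro ⟨i, rfl⟩; obtain ⟨k, hk, -⟩ := B i; exact ⟨k, hk.symm⟩
  subst hπρ
  have hdeg : ∀ i, (P i (π i)).degree = (Q i (π i)).degree := by
    intro i
    obtain ⟨k, hk, h1⟩ := A i
    obtain ⟨l, hl, h2⟩ := B i
    obtain rfl := hm.injective hk
    obtain rfl := hm.injective hl
    exact le_antisymm h2 h1
  funext i
  by_contra hc
  obtain ⟨k, hk, hd⟩ := cpl_key_span P π hm.injective hp (P i - Q i)
    (Submodule.sub_mem _ (memP i) (memQ i)) (sub_ne_zero.mpr hc)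
  refine absurd hd (not_le.mpr ?_)
  rw [Pi.sub_apply]
  by_cases hki : k = i
  · subst hki
    exact degree_sub_lt_left (hdeg k) (hp k).1 (by rw [(hmon k).leadingCoeff, (hmon' k).leadingCoeff])
  · refine (degree_sub_le _ _).trans_lt (max_lt (hcol k i (Ne.symm hki)) ?_)
    rw [hdeg]
    exact hcol' k i (Ne.symm hki)

/-- the pivot column of row r -/
def cplA (δ : ℕ) {m : ℕ} (s : Fin m → ℕ) (r : Lex ((j : Fin m) × Fin (cplα δ s j - 1))) :
    CplIdx δ s :=
  toLex ⟨(ofLex r).1, Fin.castLE (Nat.sub_le _ 1) (ofLex r).2⟩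

/-- the column following the pivot column of row r -/
def cplB (δ : ℕ) {m : ℕ} (s : Fin m → ℕ) (r : Lex ((j : Fin m) × Fin (cplα δ s j - 1))) :
    CplIdx δ s :=
  toLex ⟨(ofLex r).1, ⟨((ofLex r).2 : ℕ) + 1, by have := (ofLex r).2.2; omega⟩⟩

theorem cpl_ext {m : ℕ} {f : Fin m → ℕ} {c d : Lex ((j : Fin m) × Fin (f j))}
    (h1 : (ofLex c).1 = (ofLex d).1) (h2 : ((ofLex c).2 : ℕ) = ((ofLex d).2 : ℕ)) : c = d := by
  obtain ⟨j, i⟩ := c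
  obtain ⟨j', i'⟩ := d
  change j = j' at h1
  subst h1
  change (i : ℕ) = i' at h2
  have : i = i' := Fin.ext h2
  subst this
  rfl

theorem cplA_strictMono (δ : ℕ) {m : ℕ} (s : Fin m → ℕ) : StrictMono (cplA δ s) := by
  intro a b hab
  rw [Sigma.Lex.lt_def] at hab ⊢
  rcases hab with h | ⟨h, h'⟩
  · exact Or.inl h
  · refine Or.inr ⟨h, ?_⟩
    obtain ⟨j, i⟩ := a
    obtain ⟨j', i'⟩ := b
    change j = j' at h
    subst h
    exact h'

theorem cplA_lt_cplB (δ : ℕ) {m : ℕ} (s : Fin m → ℕ) (r) : cplA δ s r < cplB δ s r := by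
  rw [Sigma.Lex.lt_def]
  exact Or.inr ⟨rfl, Nat.lt_succ_self _⟩

theorem cplZ_A (K : Type*) [Field K] (δ : ℕ) {m : ℕ} (s : Fin m → ℕ) (r) :
    cplZ K δ s r (cplA δ s r) = X ^ δ := by
  simp [cplZ, cplA]

theorem cplZ_B (K : Type*) [Field K] (δ : ℕ) {m : ℕ} (s : Fin m → ℕ) (r) :
    cplZ K δ s r (cplB δ s r) = -1 := by
  simp [cplZ, cplB]

theorem cplZ_other (K : Type*) [Field K] (δ : ℕ) {m : ℕ} (s : Fin m → ℕ) (r c)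
    (h1 : c ≠ cplA δ s r) (h2 : c ≠ cplB δ s r) : cplZ K δ s r c = 0 := by
  simp only [cplZ, Matrix.of_apply]
  split_ifs with h h' h'
  · exact absurd (cpl_ext h.symm h') h1
  · exact absurd (cpl_ext h.symm h') h2
  · rfl
  · rfl

theorem cplZ_row (K : Type*) [Field K] (δ : ℕ) {m : ℕ} (s : Fin m → ℕ) (r) :
    cplZ K δ s r = (X ^ δ : K[X]) • Pi.single (cplA δ s r) 1 - Pi.single (cplB δ s r) 1 := by
  have hne := (cplA_lt_cplB δ s r).ne
  funext c
  by_cases h1 : c = cplA δ s r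
  · subst h1; simp [cplZ_A, hne]
  by_cases h2 : c = cplB δ s r
  · subst h2; simp [cplZ_B, hne.symm]
  · simp [cplZ_other K δ s r c h1 h2, h1, h2]

theorem cplZ_popov_of (K : Type*) [Field K] (δ : ℕ) (hδ : 0 < δ) {m : ℕ} (s : Fin m → ℕ)
    (t : CplIdx δ s → ℤ)
    (h : ∀ r, piv t (cplZ K δ s r) = ((cplA δ s r : CplIdx δ s) : WithBot (CplIdx δ s))) :
    IsPopov t (cplZ K δ s) := by
  refine ⟨⟨fun r => by rw [h]; exact WithBot.coe_ne_bot, fun a b hab => ?_⟩, ?_⟩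
  · simp only [h, WithBot.coe_lt_coe]; exact cplA_strictMono δ s hab
  · intro r j hj
    rw [h, WithBot.coe_inj] at hj
    subst hj
    rw [cplZ_A]
    refine ⟨monic_X_pow δ, fun r' hr => ?_⟩
    have hne : cplA δ s r ≠ cplA δ s r' := fun e => hr ((cplA_strictMono δ s).injective e).symm
    by_cases h2 : cplA δ s r = cplB δ s r'
    · rw [h2, cplZ_B, degree_X_pow]; simpa using hδ
    · rw [cplZ_other _ _ _ _ _ hne h2, degree_X_pow, degree_zero]; exact WithBot.bot_lt_coe _

theorem cplZ_piv (K : Type*) [Field K] (δ : ℕ) {m : ℕ} (s : Fin m → ℕ)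
    (t : CplIdx δ s → ℤ) (r) (h : t (cplB δ s r) < δ + t (cplA δ s r)) :
    rdegRow t (cplZ K δ s r) = ((δ + t (cplA δ s r) : ℤ) : WithBot ℤ) ∧
    piv t (cplZ K δ s r) = ((cplA δ s r : CplIdx δ s) : WithBot (CplIdx δ s)) := by
  have hA : degZ (cplZ K δ s r (cplA δ s r)) + (t (cplA δ s r) : WithBot ℤ)
      = ((δ + t (cplA δ s r) : ℤ) : WithBot ℤ) := by
    rw [cplZ_A]; unfold degZ; rw [degree_X_pow]; rfl
  have hlt : ∀ k, k ≠ cplA δ s r → degZ (cplZ K δ s r k) + (t k : WithBot ℤ) <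
      degZ (cplZ K δ s r (cplA δ s r)) + (t (cplA δ s r) : WithBot ℤ) := by
    intro k hk
    rw [hA]
    by_cases hB : k = cplB δ s r
    · subst hB
      have : degZ (cplZ K δ s r (cplB δ s r)) = ((0 : ℤ) : WithBot ℤ) := by
        rw [cplZ_B]; unfold degZ; rw [degree_neg, degree_one]; rfl
      rw [this, ← WithBot.coe_add, WithBot.coe_lt_coe]
      omega
    · rw [cplZ_other _ _ _ _ _ hk hB]
      simp [degZ, WithBot.bot_lt_coe]
  rw [← hA]
  refine cpl_piv_eq _ _ _ ?_ ?_ ?_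
  · rw [cplZ_A]; exact (monic_X_pow δ).ne_zero
  · intro k
    by_cases hk : k = cplA δ s r
    · rw [hk]
    · exact (hlt k hk).le
  · exact fun k hk => hlt k hk.ne'

theorem cplShift_A (δ : ℕ) {m : ℕ} (s : Fin m → ℕ) (r) : cplShift δ s (cplA δ s r) = δ := by
  have := (ofLex r).2.2
  have h : ¬ ((ofLex r).2 : ℕ) = cplα δ s (ofLex r).1 - 1 := by omega
  simp [cplShift, cplA, h]

theorem cplShift_B (δ : ℕ) (hδ : 0 < δ) {m : ℕ} (s : Fin m → ℕ) (r) :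
    0 < cplShift δ s (cplB δ s r) := by
  unfold cplShift
  split_ifs
  · have h2 := (ofLex r).2.2
    change 0 < cplβ δ s (ofLex r).1
    have h6 : 0 < cplα δ s (ofLex r).1 - 1 := by omega
    clear h2
    generalize (ofLex r).1 = j at h6 ⊢
    unfold cplβ
    have h3 : 1 < cplα δ s j := by omega
    have h4 : cplα δ s j = (s j + δ - 1) / δ := by
      unfold cplα at h3 ⊢; omega
    have h5 := Nat.div_mul_le_self (s j + δ - 1) δ
    rw [← h4] at h5
    rw [Nat.sub_mul, one_mul]
    have h7 : δ ≤ cplα δ s j * δ := Nat.le_mul_of_pos_left _ (by omega)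
    clear h4 h3 h6
    generalize cplα δ s j * δ = q at *
    omega
  · exact hδ

theorem cplZ_span (K : Type*) [Field K] (δ : ℕ) {m : ℕ} (s : Fin m → ℕ) :
    Submodule.span K[X] (Set.range fun r => cplZ K δ s r) = leftKernel (cplE K δ s) := by
  classical
  have hE : ∀ c, (cplE K δ s).vecMulLinear (Pi.single c 1) = cplE K δ s c := by
    intro c; simp [Matrix.vecMulLinear]; rfl
  apply le_antisymm
  · rw [Submodule.span_le]
    rintro _ ⟨r, rfl⟩
    change _ ∈ LinearMap.ker _
    rw [LinearMap.mem_ker]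
    change (cplE K δ s).vecMulLinear (cplZ K δ s r) = 0
    rw [cplZ_row, map_sub, map_smul, hE, hE]
    funext j
    simp only [cplE, cplA, cplB, Pi.sub_apply, Pi.smul_apply, Matrix.of_apply, smul_eq_mul,
      Pi.zero_apply, ofLex_toLex]
    by_cases hj : (ofLex r).1 = j
    · simp only [hj, if_true, Fin.val_castLE]; ring
    · simp [hj]
  · intro p hp
    have hα : ∀ j, 0 < cplα δ s j := fun j => by unfold cplα; omega
    set S := Submodule.span K[X] (Set.range fun r => cplZ K δ s r) with hS
    -- reduction of unit vectors
    have hred : ∀ (j : Fin m) (i : ℕ) (hi : i < cplα δ s j),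
        (Pi.single (toLex ⟨j, ⟨i, hi⟩⟩ : CplIdx δ s) 1 : CplIdx δ s → K[X]) -
          (X ^ (i * δ) : K[X]) • Pi.single (toLex ⟨j, ⟨0, hα j⟩⟩ : CplIdx δ s) 1 ∈ S := by
      intro j i
      induction i with
      | zero => intro hi; simp
      | succ i ih =>
        intro hi
        have h1 := S.smul_mem (X ^ δ : K[X]) (ih (by omega))
        have h2 : cplZ K δ s (toLex ⟨j, ⟨i, by omega⟩⟩) ∈ S := Submodule.subset_span ⟨_, rfl⟩
        rw [cplZ_row] at h2
        have h3 := S.sub_mem h1 h2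
        convert h3 using 1
        change _ = (X ^ δ : K[X]) • ((Pi.single (toLex ⟨j, ⟨i, by omega⟩⟩ : CplIdx δ s) 1 : CplIdx δ s → K[X]) - _) -
          ((X ^ δ : K[X]) • (Pi.single (toLex ⟨j, ⟨i, by omega⟩⟩ : CplIdx δ s) 1 : CplIdx δ s → K[X]) - Pi.single (toLex ⟨j, ⟨i+1, hi⟩⟩ : CplIdx δ s) 1)
        rw [smul_sub, smul_smul, ← pow_add, show δ + i * δ = (i + 1) * δ by ring]
        abel
    have hdec : p = ∑ c, p c • (Pi.single c 1 : CplIdx δ s → K[X]) := by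
      exact pi_eq_sum_univ' p
    have hmem : ∑ c, p c • ((Pi.single c 1 : CplIdx δ s → K[X]) -
        (X ^ (((ofLex c).2 : ℕ) * δ) : K[X]) •
          Pi.single (toLex ⟨(ofLex c).1, ⟨0, hα _⟩⟩ : CplIdx δ s) 1) ∈ S :=
      S.sum_mem fun c _ => S.smul_mem _ (hred (ofLex c).1 (ofLex c).2 (ofLex c).2.2)
    have hz : ∑ c, p c • ((X ^ (((ofLex c).2 : ℕ) * δ) : K[X]) •
          (Pi.single (toLex ⟨(ofLex c).1, ⟨0, hα _⟩⟩ : CplIdx δ s) 1 : CplIdx δ s → K[X])) = 0 := by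
      have hk : ∀ j, ∑ c, p c * cplE K δ s c j = 0 := by
        intro j
        exact congrFun (LinearMap.mem_ker.mp hp) j
      have : ∀ c, p c • ((X ^ (((ofLex c).2 : ℕ) * δ) : K[X]) •
          (Pi.single (toLex ⟨(ofLex c).1, ⟨0, hα _⟩⟩ : CplIdx δ s) 1 : CplIdx δ s → K[X])) =
          ∑ j, (p c * cplE K δ s c j) • (Pi.single (toLex ⟨j, ⟨0, hα _⟩⟩ : CplIdx δ s) 1 : CplIdx δ s → K[X]) := by
        intro c
        rw [Finset.sum_eq_single (ofLex c).1]
        · simp [cplE, smul_smul]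
        · intro j _ hj
          simp [cplE, hj.symm]
        · simp
      rw [Finset.sum_congr rfl fun c _ => this c, Finset.sum_comm]
      refine Finset.sum_eq_zero fun j _ => ?_
      rw [← Finset.sum_smul, hk, zero_smul]
    simp only [smul_sub, Finset.sum_sub_distrib] at hmem
    rw [hz, sub_zero, ← hdec] at hmem
    exact hmem

end Helpers

/-- Lemma 5.5: `Z` is the unique basis of the left kernel
of `E` in `0`-Popov form; moreover it is in `(−s̄)`-Popov form, has
`(−s̄)`-row degree `0`, and its `(−s̄)`-pivot profile is
`(α_1+⋯+α_{j−1}+i, δ)`. -/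
theorem cplZ_kernel_popov {K : Type*} [Field K] {m : ℕ}
    (s : Fin m → ℕ) (δ : ℕ) (hδ : 0 < δ) :
    (IsBasisOf (cplZ K δ s) (leftKernel (cplE K δ s)) ∧
      IsPopov (fun _ => (0 : ℤ)) (cplZ K δ s) ∧
      ∀ Z' : Matrix (Lex ((j : Fin m) × Fin (cplα δ s j - 1))) (CplIdx δ s) K[X],
        IsBasisOf Z' (leftKernel (cplE K δ s)) → IsPopov (fun _ => (0 : ℤ)) Z' →
        Z' = cplZ K δ s) ∧
    IsPopov (fun c => -(cplShift δ s c : ℤ)) (cplZ K δ s) ∧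
    (∀ r, rdeg (fun c => -(cplShift δ s c : ℤ)) (cplZ K δ s) r = ((0 : ℤ) : WithBot ℤ)) ∧
    (∀ r, piv (fun c => -(cplShift δ s c : ℤ)) (cplZ K δ s r) =
        ((toLex ⟨(ofLex r).1, Fin.castLE (Nat.sub_le _ 1) (ofLex r).2⟩ : CplIdx δ s) :
          WithBot (CplIdx δ s)) ∧
      pivDeg (fun c => -(cplShift δ s c : ℤ)) (cplZ K δ s r) = δ) := by
  have h0 : ∀ r, piv (fun _ => (0 : ℤ)) (cplZ K δ s r) =
      ((cplA δ s r : CplIdx δ s) : WithBot (CplIdx δ s)) :=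
    fun r => (cplZ_piv K δ s (fun _ => 0) r (by simpa using hδ)).2
  have h1 := fun r => cplZ_piv K δ s (fun c => -(cplShift δ s c : ℤ)) r (by
    have := cplShift_A δ s r
    have := cplShift_B δ hδ s r
    omega)
  have hP0 := cplZ_popov_of K δ hδ s _ h0
  refine ⟨⟨⟨?_, cplZ_span K δ s⟩, hP0, ?_⟩, ?_, ?_, ?_⟩
  · exact cpl_linInd _ (cplA δ s) (cplA_strictMono δ s).injective
      fun r => cpl_piv_zero_conv _ _ (h0 r)
  · intro Z' hb hp
    exact cpl_popov_unique Z' _ hp hP0 (hb.2.trans (cplZ_span K δ s).symm)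
  · exact cplZ_popov_of K δ hδ s _ fun r => (h1 r).2
  · intro r
    refine (h1 r).1.trans ?_
    simp [cplShift_A]
  · intro r
    refine ⟨(h1 r).2, ?_⟩
    unfold pivDeg
    rw [(h1 r).2]
    simp [cplZ_A]
end

section
/- Let K be a field, fix s = (s_1,…,s_m) ∈ ℕ^m and δ ∈ ℤ_{>0}, with the associated α_j, β_j, m̄, expansion-compression matrix E, expanded shift s̄ and matrix Z as in the column partial linearization. Let F ∈ K[x]^{m×n}. Then: (i) cdeg_{s̄}(EF) = cdeg_s(F); (ii) {qE : q ∈ ker(EF)} = ker(F); (iii) if K ∈ K[x]^{k×m} is a basis of ker(F) (so k = m − rank(F)) and K̄ ∈ K[x]^{k×m̄} is any matrix with K = K̄E, then the stacked matrix B = [K̄; Z] ∈ K[x]^{(k+m̄−m)×m̄} is a basis of ker(EF); (iv) if moreover rdeg_{−s}(K) ≥ 0 entrywise and K̄ is the column partial linearization of K, then rdeg_{−s̄}(B) = (rdeg_{−s}(K), 0) (concatenation), and if K is in −s-weak Popov form then B is in −s̄-unordered weak Popov form. -/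
open Polynomial Matrix

section aux
variable {K : Type*} [Field K] {m : ℕ} (s : Fin m → ℕ) (δ : ℕ)

theorem aux_degZ_zero : degZ (0 : K[X]) = ⊥ := by simp [degZ]

theorem aux_degZ_ne {p : K[X]} (hp : p ≠ 0) : degZ p = ((p.natDegree : ℤ) : WithBot ℤ) := by
  rw [degZ, Polynomial.degree_eq_natDegree hp]; rfl

theorem aux_α_pos (j : Fin m) : 0 < cplα δ s j := by
  unfold cplα; omega

/-- column `(j,a)` -/
def auxCol (j : Fin m) (a : ℕ) (ha : a < cplα δ s j) : CplIdx δ s := toLex ⟨j, ⟨a, ha⟩⟩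

theorem aux_α_mul (hδ : 0 < δ) (j : Fin m) :
    (cplα δ s j - 1) * δ ≤ s j ∧ (1 < cplα δ s j → (cplα δ s j - 1) * δ < s j) ∧
      s j ≤ cplα δ s j * δ := by
  unfold cplα
  have h1 := Nat.div_mul_le_self (s j + δ - 1) δ
  have h2 := Nat.lt_div_mul_add (a := s j + δ - 1) hδ
  generalize (s j + δ - 1) / δ = q at *
  rcases Nat.eq_zero_or_pos q with h | h
  · subst h; simp; omega
  · obtain ⟨t, rfl⟩ : ∃ t, q = t + 1 := ⟨q - 1, by omega⟩
    rw [max_eq_right h]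
    simp only [Nat.add_sub_cancel]
    rw [Nat.add_mul] at *
    refine ⟨by omega, fun _ => by omega, by omega⟩

theorem aux_E_col (j j' : Fin m) (a : ℕ) (ha : a < cplα δ s j) :
    cplE K δ s (auxCol s δ j a ha) j' = if j = j' then X ^ (a * δ) else 0 := rfl

theorem aux_Z_col (j j' : Fin m) (x : Fin (cplα δ s j - 1)) (a : ℕ) (ha : a < cplα δ s j') :
    cplZ K δ s (toLex ⟨j, x⟩) (auxCol s δ j' a ha) = if j = j' then
      (if a = (x : ℕ) then X ^ δ else if a = x + 1 then -1 else 0) else 0 := rfl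

theorem aux_vecMul_E (q : CplIdx δ s → K[X]) (j : Fin m) :
    (q ᵥ* cplE K δ s) j =
      ∑ a : Fin (cplα δ s j), q (toLex ⟨j, a⟩) * X ^ ((a : ℕ) * δ) := by
  have : (q ᵥ* cplE K δ s) j = ∑ c : ((j : Fin m) × Fin (cplα δ s j)),
      q (toLex c) * cplE K δ s (toLex c) j := by
    rw [Matrix.vecMul, dotProduct]
    exact Fintype.sum_equiv ofLex _ _ (fun x => rfl)
  rw [this, Fintype.sum_sigma, Finset.sum_eq_single j]
  · simp [cplE]
  · intro b _ hb; simp [cplE, hb]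
  · simp

theorem aux_E_mul {n : ℕ} (F : Matrix (Fin m) (Fin n) K[X]) (c : CplIdx δ s) (j : Fin n) :
    (cplE K δ s * F) c j = X ^ (((ofLex c).2 : ℕ) * δ) * F (ofLex c).1 j := by
  rw [Matrix.mul_apply, Finset.sum_eq_single (ofLex c).1]
  · simp [cplE]
  · intro b _ hb; simp [cplE, hb.symm]
  · simp

theorem aux_cdeg {n : ℕ} (hδ : 0 < δ) (F : Matrix (Fin m) (Fin n) K[X]) (j : Fin n) :
    cdeg (fun c => (cplShift δ s c : ℤ)) (cplE K δ s * F) j =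
        cdeg (fun i => (s i : ℤ)) F j := by
  have key : ∀ c : CplIdx δ s, ((ofLex c).2 : ℕ) * δ + cplShift δ s c ≤ s (ofLex c).1 ∧
      (((ofLex c).2 : ℕ) = cplα δ s (ofLex c).1 - 1 →
        ((ofLex c).2 : ℕ) * δ + cplShift δ s c = s (ofLex c).1) := by
    intro c
    have h1 := aux_α_mul s δ hδ (ofLex c).1
    have h2 := (ofLex c).2.2
    unfold cplShift
    split_ifs with h
    · rw [h]; unfold cplβ; omega
    · refine ⟨le_trans ?_ h1.1, fun h' => absurd h' h⟩
      rw [← Nat.succ_mul]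
      exact Nat.mul_le_mul_right _ (by omega)
  have deg : ∀ c : CplIdx δ s, F (ofLex c).1 j ≠ 0 → degZ ((cplE K δ s * F) c j)
      + ((cplShift δ s c : ℤ) : WithBot ℤ) = (((((ofLex c).2 : ℕ) * δ + cplShift δ s c : ℕ) +
        (F (ofLex c).1 j).natDegree : ℤ) : WithBot ℤ) := by
    intro c h
    rw [aux_E_mul, aux_degZ_ne (by simp [h]), Polynomial.natDegree_mul (by simp) h]
    rw [← WithBot.coe_add]; congr 1
    simp; ring
  unfold cdeg
  apply le_antisymm
  · apply Finset.sup_le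
    intro c _
    refine le_trans ?_ (Finset.le_sup (Finset.mem_univ (ofLex c).1))
    by_cases h : F (ofLex c).1 j = 0
    · rw [aux_E_mul, h]; simp [aux_degZ_zero]
    · rw [deg c h, aux_degZ_ne h, ← WithBot.coe_add, WithBot.coe_le_coe]
      have := (key c).1
      push_cast; omega
  · apply Finset.sup_le
    intro i _
    have hα := aux_α_pos s δ i
    let c : CplIdx δ s := auxCol s δ i (cplα δ s i - 1) (by omega)
    refine le_trans ?_ (Finset.le_sup (Finset.mem_univ c))
    by_cases h : F i j = 0
    · simp [h, aux_degZ_zero]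
    · have := (key c).2 rfl
      rw [deg c h, aux_degZ_ne h, this, ← WithBot.coe_add, WithBot.coe_le_coe]
      change ((F i j).natDegree : ℤ) + (s i : ℤ) ≤ ((s i : ℤ) + (F i j).natDegree)
      omega

theorem aux_surj : Function.Surjective (cplE K δ s).vecMulLinear := by
  intro p
  refine ⟨fun c => if ((ofLex c).2 : ℕ) = 0 then p (ofLex c).1 else 0, ?_⟩
  funext j
  rw [Matrix.vecMulLinear_apply, aux_vecMul_E, Finset.sum_eq_single ⟨0, aux_α_pos s δ j⟩]
  · simp
  · intro b _ hb
    have : (b : ℕ) ≠ 0 := fun h => hb (Fin.ext h)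
    simp [this]
  · simp

theorem aux_ker {n : ℕ} (F : Matrix (Fin m) (Fin n) K[X]) :
    leftKernel (cplE K δ s * F) = (leftKernel F).comap (cplE K δ s).vecMulLinear := by
  ext q
  simp [leftKernel, Matrix.vecMul_vecMul]

theorem aux_Z_row (j : Fin m) (a : ℕ) (ha : a < cplα δ s j - 1) :
    cplZ K δ s (toLex ⟨j, ⟨a, ha⟩⟩) =
      (X ^ δ : K[X]) • Pi.single (auxCol s δ j a (by omega)) (1 : K[X]) -
        Pi.single (auxCol s δ j (a + 1) (by omega)) (1 : K[X]) := by
  funext c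
  obtain ⟨⟨j', b⟩, rfl⟩ := toLex.surjective c
  by_cases hj : j = j'
  · subst hj
    have h : ∀ (x : ℕ) (hx : x < cplα δ s j), (toLex ⟨j, b⟩ : CplIdx δ s) = auxCol s δ j x hx ↔ (b : ℕ) = x := by
      intro x hx
      constructor
      · intro h
        have := toLex.injective h
        simp at this
        rw [this]
      · intro h
        subst h; rfl
    simp only [cplZ, Matrix.of_apply, Pi.sub_apply, Pi.smul_apply, Pi.single_apply, h, ofLex_toLex]
    by_cases h1 : (b : ℕ) = a
    · simp [h1]
    · by_cases h2 : (b : ℕ) = a + 1 <;> simp [h1, h2]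
  · have h : ∀ (x : ℕ) (hx : x < cplα δ s j), (toLex ⟨j', b⟩ : CplIdx δ s) ≠ auxCol s δ j x hx := by
      intro x hx h
      have := toLex.injective h
      simp at this
      exact hj this.1.symm
    simp [cplZ, h, hj]

theorem aux_Z_E (r) : (cplZ K δ s r) ᵥ* cplE K δ s = 0 := by
  obtain ⟨⟨j, ⟨a, ha⟩⟩, rfl⟩ := toLex.surjective r
  rw [aux_Z_row, Matrix.sub_vecMul, Matrix.smul_vecMul]
  funext j'
  simp only [Pi.sub_apply, Pi.smul_apply, Matrix.single_one_vecMul, Matrix.row, smul_eq_mul,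
    Pi.zero_apply, aux_E_col]
  split_ifs <;> ring

theorem aux_span_Z (q : CplIdx δ s → K[X]) (hq : q ᵥ* cplE K δ s = 0) :
    q ∈ Submodule.span K[X] (Set.range fun r => cplZ K δ s r) := by
  set S := Submodule.span K[X] (Set.range fun r => cplZ K δ s r)
  have hS : ∀ (j : Fin m) (a : ℕ) (ha : a < cplα δ s j),
      Pi.single (auxCol s δ j a ha) (1 : K[X]) - (X ^ (a * δ) : K[X]) •
        Pi.single (auxCol s δ j 0 (by omega)) (1 : K[X]) ∈ S := by
    intro j a
    induction a with
    | zero => intro ha; simp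
    | succ a ih =>
      intro ha
      have h1 := ih (by omega)
      have h2 : cplZ K δ s (toLex ⟨j, ⟨a, by omega⟩⟩) ∈ S := Submodule.subset_span ⟨_, rfl⟩
      rw [aux_Z_row] at h2
      have := S.sub_mem (S.smul_mem (X ^ δ : K[X]) h1) h2
      convert this using 1
      rw [smul_sub, smul_smul, ← pow_add, Nat.succ_mul, Nat.add_comm δ]
      abel
  have e1 : q = ∑ c : (j : Fin m) × Fin (cplα δ s j), q (toLex c) • Pi.single (toLex c) (1 : K[X]) := by
    have : ∑ c : (j : Fin m) × Fin (cplα δ s j), q (toLex c) • Pi.single (toLex c) (1 : K[X])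
        = ∑ c : CplIdx δ s, q c • Pi.single c (1 : K[X]) :=
      Fintype.sum_equiv toLex _ _ (fun x => rfl)
    rw [this]
    exact pi_eq_sum_univ' q
  have e2 : ∑ c : (j : Fin m) × Fin (cplα δ s j), q (toLex c) • ((X ^ ((c.2 : ℕ) * δ) : K[X]) •
        (Pi.single (auxCol s δ c.1 0 (aux_α_pos s δ c.1)) (1 : K[X]) : CplIdx δ s → K[X])) = 0 := by
    rw [Fintype.sum_sigma]
    apply Finset.sum_eq_zero
    intro j _
    have := congrFun hq j
    rw [aux_vecMul_E] at this
    simp only [smul_smul]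
    calc _ = (∑ a : Fin (cplα δ s j), q (toLex ⟨j, a⟩) * X ^ ((a : ℕ) * δ)) •
          (Pi.single (auxCol s δ j 0 (aux_α_pos s δ j)) (1 : K[X]) : CplIdx δ s → K[X]) := by
            rw [Finset.sum_smul]
      _ = 0 := by rw [this]; simp
  rw [e1, ← sub_zero (Finset.sum _ _), ← e2, ← Finset.sum_sub_distrib]
  apply S.sum_mem
  intro c _
  rw [← smul_sub]
  exact S.smul_mem _ (hS c.1 c.2 c.2.2)

theorem aux_Z_apply (d : Lex ((j : Fin m) × Fin (cplα δ s j - 1)) → K[X]) (j : Fin m) (a : ℕ)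
    (ha : a < cplα δ s j - 1) :
    (∑ r, d r • cplZ K δ s r) (auxCol s δ j a (by omega)) =
      d (toLex ⟨j, ⟨a, ha⟩⟩) * X ^ δ - (if h : 0 < a then d (toLex ⟨j, ⟨a - 1, by omega⟩⟩) else 0) := by
  have : ∑ r, d r • cplZ K δ s r = ∑ r : (j : Fin m) × Fin (cplα δ s j - 1), d (toLex r) • cplZ K δ s (toLex r) :=
      Fintype.sum_equiv ofLex _ _ (fun x => rfl)
  rw [this, Finset.sum_apply, Fintype.sum_sigma, Finset.sum_eq_single j]
  · simp only [Pi.smul_apply, aux_Z_col, if_true, smul_eq_mul]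
    have : ∀ x : Fin (cplα δ s j - 1), d (toLex ⟨j, x⟩) * (if a = (x : ℕ) then (X ^ δ : K[X]) else if a = x + 1 then -1 else 0)
      = (if x = ⟨a, ha⟩ then d (toLex ⟨j, x⟩) * X ^ δ else 0) + (if a = (x : ℕ) + 1 then - d (toLex ⟨j, x⟩) else 0) := by
      intro x
      by_cases h : x = ⟨a, ha⟩
      · subst h; simp
      · have : a ≠ (x : ℕ) := fun h' => h (Fin.ext h'.symm)
        simp [h, this]
    simp only [this]
    rw [Finset.sum_add_distrib, Finset.sum_ite_eq' Finset.univ, if_pos (Finset.mem_univ _), sub_eq_add_neg]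
    congr 1
    split_ifs with h
    · rw [Finset.sum_eq_single ⟨a - 1, by omega⟩]
      · rw [if_pos]; simp; omega
      · intro b _ hb
        rw [if_neg]
        intro h'; apply hb; apply Fin.ext; simp; omega
      · simp
    · rw [neg_zero]; apply Finset.sum_eq_zero
      intro b _; rw [if_neg]; omega
  · intro b _ hb
    simp [aux_Z_col, hb]
  · simp

theorem aux_Z_indep (d : Lex ((j : Fin m) × Fin (cplα δ s j - 1)) → K[X])
    (hd : ∑ r, d r • cplZ K δ s r = 0) : d = 0 := by
  funext r
  obtain ⟨⟨j, ⟨a, ha⟩⟩, rfl⟩ := toLex.surjective r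
  induction a with
  | zero =>
    have := aux_Z_apply s δ d j 0 ha
    rw [hd] at this
    simpa using this
  | succ a ih =>
    have := aux_Z_apply s δ d j (a + 1) ha
    have ih' := ih (by omega)
    rw [hd] at this
    simp at ih'
    simpa [ih'] using this

theorem aux_basis {n k : ℕ} (F : Matrix (Fin m) (Fin n) K[X])
    (Kb : Matrix (Fin k) (Fin m) K[X]) (hKb : IsBasisOf Kb (leftKernel F))
    (Kbar : Matrix (Fin k) (CplIdx δ s) K[X]) (hKE : Kb = Kbar * cplE K δ s) :
    IsBasisOf (Matrix.of (Sum.elim (fun i => Kbar i) (fun r => cplZ K δ s r)) :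
      Matrix (Fin k ⊕ Lex ((j : Fin m) × Fin (cplα δ s j - 1))) (CplIdx δ s) K[X])
      (leftKernel (cplE K δ s * F)) := by
  have hrow : ∀ i, (Kbar i) ᵥ* cplE K δ s = Kb i := by
    intro i; rw [hKE]; rfl
  have hsum : ∀ c : Fin k → K[X], (∑ i, c i • Kbar i) ᵥ* cplE K δ s = ∑ i, c i • Kb i := by
    intro c
    rw [← Matrix.vecMulLinear_apply, map_sum]
    simp [hrow]
  have hZsum : ∀ d : Lex ((j : Fin m) × Fin (cplα δ s j - 1)) → K[X],
      (∑ i, d i • cplZ K δ s i) ᵥ* cplE K δ s = 0 := by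
    intro c
    rw [← Matrix.vecMulLinear_apply, map_sum]
    simp [aux_Z_E]
  rw [aux_ker]
  constructor
  · rw [Fintype.linearIndependent_iff]
    intro g hg
    rw [Fintype.sum_sum_type] at hg
    change ∑ i, g (Sum.inl i) • Kbar i + ∑ r, g (Sum.inr r) • cplZ K δ s r = 0 at hg
    have h1 := congrArg (fun v => v ᵥ* cplE K δ s) hg
    simp only [Matrix.add_vecMul, hsum, hZsum (fun r => g (Sum.inr r)), Matrix.zero_vecMul, add_zero] at h1
    have h2 := Fintype.linearIndependent_iff.1 hKb.1 _ h1
    simp only [h2, zero_smul, Finset.sum_const_zero, zero_add] at hg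
    have h3 := aux_Z_indep s δ (fun r => g (Sum.inr r)) hg
    rintro (i | r)
    · exact h2 i
    · exact congrFun h3 r
  · apply le_antisymm
    · rw [Submodule.span_le]
      rintro _ ⟨i | r, rfl⟩
      · change (Kbar i) ᵥ* cplE K δ s ∈ leftKernel F
        rw [hrow, ← hKb.2]
        exact Submodule.subset_span ⟨i, rfl⟩
      · change (cplZ K δ s r) ᵥ* cplE K δ s ∈ leftKernel F
        rw [aux_Z_E]; exact Submodule.zero_mem _
    · intro q hq
      rw [Submodule.mem_comap, ← hKb.2, Submodule.mem_span_range_iff_exists_fun] at hq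
      obtain ⟨c, hc⟩ := hq
      have h1 : q - ∑ i, c i • Kbar i ∈ Submodule.span K[X] (Set.range fun r => cplZ K δ s r) := by
        apply aux_span_Z
        rw [Matrix.sub_vecMul, hsum, hc]; simp
      rw [← sub_add_cancel q (∑ i, c i • Kbar i)]
      apply Submodule.add_mem
      · refine Submodule.span_mono ?_ h1
        rintro _ ⟨r, rfl⟩
        exact ⟨Sum.inr r, rfl⟩
      · apply Submodule.sum_mem
        intro i _
        exact Submodule.smul_mem _ _ (Submodule.subset_span ⟨Sum.inl i, rfl⟩)

theorem aux_piv {ν : Type*} [Fintype ν] [LinearOrder ν] (t : ν → ℤ) (v : ν → K[X]) (j : ν) :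
    piv t v = (j : WithBot ν) ↔ (v j ≠ 0 ∧ degZ (v j) + (t j : WithBot ℤ) = rdegRow t v) ∧
      ∀ j', v j' ≠ 0 → degZ (v j') + (t j' : WithBot ℤ) = rdegRow t v → j' ≤ j := by
  classical
  unfold piv
  constructor
  · intro h
    have h1 := Finset.mem_of_max h
    refine ⟨by simpa using h1, fun j' h2 h3 => ?_⟩
    exact Finset.le_max_of_eq (by simp [h2, h3]) h
  · rintro ⟨h1, h2⟩
    apply le_antisymm
    · apply Finset.max_le
      intro a ha
      simp at ha
      exact WithBot.coe_le_coe.2 (h2 a ha.1 ha.2)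
    · apply Finset.le_max
      simp [h1]

theorem aux_piv_single {ν : Type*} [Fintype ν] [LinearOrder ν] (t : ν → ℤ) (v : ν → K[X]) (j : ν)
    (h0 : degZ (v j) + (t j : WithBot ℤ) = ((0 : ℤ) : WithBot ℤ))
    (h : ∀ j', j' ≠ j → degZ (v j') + (t j' : WithBot ℤ) < ((0 : ℤ) : WithBot ℤ)) :
    rdegRow t v = ((0 : ℤ) : WithBot ℤ) ∧ piv t v = (j : WithBot ν) := by
  have h1 : rdegRow t v = ((0 : ℤ) : WithBot ℤ) := by
    unfold rdegRow
    apply le_antisymm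
    · apply Finset.sup_le
      intro j' _
      by_cases hj : j' = j
      · rw [hj, h0]
      · exact (h j' hj).le
    · rw [← h0]
      exact Finset.le_sup (f := fun j => degZ (v j) + (t j : WithBot ℤ)) (Finset.mem_univ j)
  refine ⟨h1, (aux_piv t v j).2 ⟨⟨?_, h0.trans h1.symm⟩, ?_⟩⟩
  · intro hv
    rw [hv, aux_degZ_zero] at h0
    simp at h0
  · intro j' _ h3
    by_contra hj
    have := h j' (fun h' => hj h'.le)
    rw [h3, h1] at this
    exact lt_irrefl _ this

theorem aux_shift_pos (hδ : 0 < δ) (c : CplIdx δ s) (h : 1 < cplα δ s (ofLex c).1) :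
    0 < cplShift δ s c := by
  have := (aux_α_mul s δ hδ (ofLex c).1).2.1 h
  unfold cplShift cplβ
  split_ifs <;> omega

theorem aux_Z_piv (hδ : 0 < δ) (j : Fin m) (a : ℕ) (ha : a < cplα δ s j - 1) :
    rdegRow (fun c => -(cplShift δ s c : ℤ)) (cplZ K δ s (toLex ⟨j, ⟨a, ha⟩⟩)) =
        ((0 : ℤ) : WithBot ℤ) ∧
      piv (fun c => -(cplShift δ s c : ℤ)) (cplZ K δ s (toLex ⟨j, ⟨a, ha⟩⟩)) =
        ((auxCol s δ j a (by omega) : CplIdx δ s) : WithBot (CplIdx δ s)) := by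
  apply aux_piv_single
  · rw [aux_Z_col, if_pos rfl, if_pos rfl, aux_degZ_ne (by simp), ← WithBot.coe_add]
    have : cplShift δ s (auxCol s δ j a (by omega)) = δ := by
      unfold cplShift
      rw [if_neg]
      change ¬ (a = cplα δ s j - 1)
      omega
    rw [this]
    simp
  · intro c hc
    obtain ⟨⟨j', ⟨b, hb⟩⟩, rfl⟩ := toLex.surjective c
    change auxCol s δ j' b hb ≠ _ at hc
    change degZ (cplZ K δ s _ (auxCol s δ j' b hb)) + ((-(cplShift δ s (auxCol s δ j' b hb) : ℤ) : ℤ) : WithBot ℤ) < _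
    rw [aux_Z_col]
    split_ifs with h1 h2 h3
    · subst h1
      simp only at h2
      subst h2
      exact absurd rfl hc
    · subst h1
      have := aux_shift_pos s δ hδ (auxCol s δ j b hb) (by change 1 < cplα δ s j; omega)
      rw [aux_degZ_ne (by simp), ← WithBot.coe_add, WithBot.coe_lt_coe]
      simp; exact this
    · rw [aux_degZ_zero]; simp
    · rw [aux_degZ_zero]; simp

/-- last column of block `j` -/
def auxLast (j : Fin m) : CplIdx δ s :=
  auxCol s δ j (cplα δ s j - 1) (Nat.sub_lt (aux_α_pos s δ j) one_pos)

theorem aux_last_cases (c : CplIdx δ s) :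
    (((ofLex c).2 : ℕ) = cplα δ s (ofLex c).1 - 1 ∧ c = auxLast s δ (ofLex c).1) ∨
      ¬ (((ofLex c).2 : ℕ) = cplα δ s (ofLex c).1 - 1) := by
  obtain ⟨⟨j', ⟨b, hb⟩⟩, rfl⟩ := toLex.surjective c
  by_cases h : b = cplα δ s j' - 1
  · left
    subst h
    exact ⟨rfl, rfl⟩
  · right; exact h

theorem aux_last_mono {j j' : Fin m} (h : j' ≤ j) : auxLast s δ j' ≤ auxLast s δ j := by
  rcases h.lt_or_eq with h | h
  · exact Sigma.Lex.left _ _ h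
  · rw [h]

theorem aux_block (v : CplIdx δ s → K[X])
    (hv : ∀ c : CplIdx δ s, ¬(((ofLex c).2 : ℕ) = cplα δ s (ofLex c).1 - 1) →
        (v c).degree < (δ : WithBot ℕ)) (j : Fin m) :
    (v (auxLast s δ j) ≠ 0 → (v ᵥ* cplE K δ s) j ≠ 0 ∧ ((v ᵥ* cplE K δ s) j).natDegree =
      (v (auxLast s δ j)).natDegree + (cplα δ s j - 1) * δ) ∧
    (v (auxLast s δ j) = 0 → ((v ᵥ* cplE K δ s) j).degree < ((cplα δ s j - 1) * δ : ℕ)) := by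
  have hα := aux_α_pos s δ j
  let l : Fin (cplα δ s j) := ⟨cplα δ s j - 1, Nat.sub_lt hα one_pos⟩
  have hlow : ∃ low : K[X], low.degree < ((cplα δ s j - 1) * δ : ℕ) ∧
      (v ᵥ* cplE K δ s) j = v (auxLast s δ j) * X ^ ((cplα δ s j - 1) * δ) + low := by
    refine ⟨∑ a ∈ Finset.univ.erase l, v (toLex ⟨j, a⟩) * X ^ ((a : ℕ) * δ), ?_, ?_⟩
    · rw [← Polynomial.mem_degreeLT]
      apply Submodule.sum_mem
      intro a ha
      have hal : (a : ℕ) ≠ cplα δ s j - 1 := fun h => (Finset.ne_of_mem_erase ha) (Fin.ext h)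
      have h1 := hv (toLex ⟨j, a⟩) hal
      rw [Polynomial.mem_degreeLT]
      by_cases h0 : v (toLex ⟨j, a⟩) = 0
      · rw [h0, zero_mul, Polynomial.degree_zero]; exact WithBot.bot_lt_coe _
      · rw [Polynomial.degree_eq_natDegree h0, Nat.cast_lt] at h1
        rw [Polynomial.degree_eq_natDegree (by simp [h0]), Nat.cast_lt,
          Polynomial.natDegree_mul h0 (by simp), Polynomial.natDegree_X_pow]
        have h2 : ((a : ℕ) + 1) * δ ≤ (cplα δ s j - 1) * δ := Nat.mul_le_mul_right _ (by omega)
        rw [Nat.add_mul] at h2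
        omega
    · rw [aux_vecMul_E]
      exact (Finset.add_sum_erase Finset.univ
        (fun a : Fin (cplα δ s j) => v (toLex ⟨j, a⟩) * X ^ ((a : ℕ) * δ)) (Finset.mem_univ l)).symm
  obtain ⟨low, h1, h2⟩ := hlow
  rw [h2]
  constructor
  · intro h
    have hd : (v (auxLast s δ j) * X ^ ((cplα δ s j - 1) * δ)).degree =
        (((v (auxLast s δ j)).natDegree + (cplα δ s j - 1) * δ : ℕ) : WithBot ℕ) := by
      rw [Polynomial.degree_mul, Polynomial.degree_X_pow, Polynomial.degree_eq_natDegree h]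
      norm_cast
    have hd2 : low.degree < (v (auxLast s δ j) * X ^ ((cplα δ s j - 1) * δ)).degree := by
      rw [hd]
      refine lt_of_lt_of_le h1 ?_
      rw [Nat.cast_le]; omega
    have hd3 := Polynomial.degree_add_eq_left_of_degree_lt hd2
    rw [hd] at hd3
    refine ⟨?_, Polynomial.natDegree_eq_of_degree_eq_some hd3⟩
    intro h0
    rw [h0, Polynomial.degree_zero] at hd3
    exact WithBot.bot_ne_coe hd3
  · intro h
    rw [h, zero_mul, zero_add]; exact h1

theorem aux_D (hδ : 0 < δ) (v : CplIdx δ s → K[X])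
    (hv : ∀ c : CplIdx δ s, ¬(((ofLex c).2 : ℕ) = cplα δ s (ofLex c).1 - 1) →
        (v c).degree < (δ : WithBot ℕ)) :
    (∀ c : CplIdx δ s, ¬(((ofLex c).2 : ℕ) = cplα δ s (ofLex c).1 - 1) →
      degZ (v c) + ((-(cplShift δ s c : ℤ) : ℤ) : WithBot ℤ) < ((0 : ℤ) : WithBot ℤ)) ∧
    ∀ j, degZ (v (auxLast s δ j)) + ((-(cplShift δ s (auxLast s δ j) : ℤ) : ℤ) : WithBot ℤ) =
        degZ ((v ᵥ* cplE K δ s) j) + ((-(s j : ℤ) : ℤ) : WithBot ℤ) ∨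
      (degZ (v (auxLast s δ j)) + ((-(cplShift δ s (auxLast s δ j) : ℤ) : ℤ) : WithBot ℤ)
          < ((0 : ℤ) : WithBot ℤ) ∧
        degZ ((v ᵥ* cplE K δ s) j) + ((-(s j : ℤ) : ℤ) : WithBot ℤ) < ((0 : ℤ) : WithBot ℤ)) := by
  constructor
  · intro c hc
    have h1 := hv c hc
    by_cases h0 : v c = 0
    · rw [h0, aux_degZ_zero]; simp
    · rw [Polynomial.degree_eq_natDegree h0, Nat.cast_lt] at h1
      rw [aux_degZ_ne h0, ← WithBot.coe_add, WithBot.coe_lt_coe]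
      unfold cplShift
      rw [if_neg hc]
      omega
  · intro j
    have hb := aux_block s δ v hv j
    have hs := (aux_α_mul s δ hδ j).1
    have hsh : cplShift δ s (auxLast s δ j) = s j - (cplα δ s j - 1) * δ := by
      unfold cplShift
      exact if_pos rfl
    by_cases h0 : v (auxLast s δ j) = 0
    · right
      refine ⟨by rw [h0, aux_degZ_zero]; simp, ?_⟩
      have h1 := hb.2 h0
      by_cases h2 : (v ᵥ* cplE K δ s) j = 0
      · rw [h2, aux_degZ_zero]; simp
      · rw [Polynomial.degree_eq_natDegree h2, Nat.cast_lt] at h1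
        rw [aux_degZ_ne h2, ← WithBot.coe_add, WithBot.coe_lt_coe]
        omega
    · left
      obtain ⟨h1, h2⟩ := hb.1 h0
      rw [aux_degZ_ne h0, aux_degZ_ne h1, ← WithBot.coe_add, ← WithBot.coe_add, h2, hsh]
      congr 1
      rw [Nat.cast_sub hs]
      push_cast
      ring

theorem aux_rdeg (hδ : 0 < δ) (v : CplIdx δ s → K[X])
    (hv : ∀ c : CplIdx δ s, ¬(((ofLex c).2 : ℕ) = cplα δ s (ofLex c).1 - 1) →
        (v c).degree < (δ : WithBot ℕ))
    (h0 : ((0 : ℤ) : WithBot ℤ) ≤ rdegRow (fun j => -(s j : ℤ)) (v ᵥ* cplE K δ s)) :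
    rdegRow (fun c => -(cplShift δ s c : ℤ)) v =
      rdegRow (fun j => -(s j : ℤ)) (v ᵥ* cplE K δ s) := by
  obtain ⟨hD1, hD2⟩ := aux_D s δ hδ v hv
  apply le_antisymm
  · apply Finset.sup_le
    intro c _
    rcases aux_last_cases s δ c with ⟨_, hc⟩ | hc
    · generalize (ofLex c).1 = j at hc
      subst hc
      rcases hD2 j with h | h
      · rw [h]
        exact Finset.le_sup (f := fun j => degZ ((v ᵥ* cplE K δ s) j) + ((-(s j : ℤ) : ℤ) : WithBot ℤ))
          (Finset.mem_univ j)
      · exact h.1.le.trans h0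
    · exact (hD1 c hc).le.trans h0
  · have hbot : (⊥ : WithBot ℤ) < rdegRow (fun j => -(s j : ℤ)) (v ᵥ* cplE K δ s) :=
      lt_of_lt_of_le (WithBot.bot_lt_coe _) h0
    obtain ⟨j, _, hj⟩ := (Finset.le_sup_iff hbot).1 (le_refl (rdegRow (fun j => -(s j : ℤ)) (v ᵥ* cplE K δ s)))
    rcases hD2 j with h | h
    · refine hj.trans ?_
      rw [← h]
      exact Finset.le_sup (f := fun c => degZ (v c) + ((-(cplShift δ s c : ℤ) : ℤ) : WithBot ℤ))
          (Finset.mem_univ (auxLast s δ j))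
    · exact absurd (lt_of_le_of_lt (h0.trans hj) h.2) (lt_irrefl _)

theorem aux_piv_last (hδ : 0 < δ) (v : CplIdx δ s → K[X])
    (hv : ∀ c : CplIdx δ s, ¬(((ofLex c).2 : ℕ) = cplα δ s (ofLex c).1 - 1) →
        (v c).degree < (δ : WithBot ℕ))
    (h0 : ((0 : ℤ) : WithBot ℤ) ≤ rdegRow (fun j => -(s j : ℤ)) (v ᵥ* cplE K δ s)) (j : Fin m)
    (hj : piv (fun j => -(s j : ℤ)) (v ᵥ* cplE K δ s) = (j : WithBot (Fin m))) :
    piv (fun c => -(cplShift δ s c : ℤ)) v =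
      ((auxLast s δ j : CplIdx δ s) : WithBot (CplIdx δ s)) := by
  obtain ⟨hD1, hD2⟩ := aux_D s δ hδ v hv
  have hr := aux_rdeg s δ hδ v hv h0
  rw [aux_piv] at hj ⊢
  rw [hr]
  obtain ⟨⟨h1, h2⟩, h3⟩ := hj
  refine ⟨?_, ?_⟩
  · have h4 : degZ (v (auxLast s δ j)) + ((-(cplShift δ s (auxLast s δ j) : ℤ) : ℤ) : WithBot ℤ) =
        rdegRow (fun j => -(s j : ℤ)) (v ᵥ* cplE K δ s) := by
      rcases hD2 j with h | h
      · rw [h, h2]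
      · exact absurd (lt_of_le_of_lt (h0.trans h2.ge) h.2) (lt_irrefl _)
    refine ⟨?_, h4⟩
    intro h5
    rw [h5, aux_degZ_zero] at h4
    rw [← h4] at h0
    simp at h0
  · intro c hc1 hc2
    rcases aux_last_cases s δ c with ⟨_, hc⟩ | hc
    · generalize (ofLex c).1 = j' at hc
      subst hc
      apply aux_last_mono
      rcases hD2 j' with h | h
      · have h4 := h.symm.trans hc2
        refine h3 j' ?_ h4
        intro h5
        rw [h5, aux_degZ_zero] at h4
        rw [← h4] at h0
        simp at h0
      · exact absurd (lt_of_le_of_lt (h0.trans hc2.ge) h.1) (lt_irrefl _)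
    · exact absurd (lt_of_le_of_lt (h0.trans hc2.ge) (hD1 c hc)) (lt_irrefl _)

end aux

/-- Lemma 5.6: properties of the column partial
linearization with respect to kernels: (i) `cdeg_{s̄}(EF) = cdeg_s(F)`;
(ii) `ker(EF)·E = ker(F)`; (iii) stacking any `K̄` with `K = K̄E` (for a basis
`K` of `ker F`) on top of `Z` gives a basis of `ker(EF)`; (iv) if `K̄` is the
column partial linearization of `K` and `rdeg_{−s}(K) ≥ 0`, then
`rdeg_{−s̄}(B) = (rdeg_{−s}(K), 0)` and `B` inherits the unordered weak Popov
property. -/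
theorem cpl_kernel {K : Type*} [Field K] {m n k : ℕ}
    (s : Fin m → ℕ) (δ : ℕ) (hδ : 0 < δ)
    (F : Matrix (Fin m) (Fin n) K[X])
    (Kb : Matrix (Fin k) (Fin m) K[X]) (hKb : IsBasisOf Kb (leftKernel F))
    (Kbar : Matrix (Fin k) (CplIdx δ s) K[X]) (hKE : Kb = Kbar * cplE K δ s) :
    let B : Matrix (Fin k ⊕ Lex ((j : Fin m) × Fin (cplα δ s j - 1))) (CplIdx δ s) K[X] :=
      Matrix.of (Sum.elim (fun i => Kbar i) (fun r => cplZ K δ s r))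
    (∀ j, cdeg (fun c => (cplShift δ s c : ℤ)) (cplE K δ s * F) j =
        cdeg (fun i => (s i : ℤ)) F j) ∧
    Submodule.map (cplE K δ s).vecMulLinear (leftKernel (cplE K δ s * F)) = leftKernel F ∧
    IsBasisOf B (leftKernel (cplE K δ s * F)) ∧
    ((∀ i, ((0 : ℤ) : WithBot ℤ) ≤ rdeg (fun j => -(s j : ℤ)) Kb i) →
      (∀ (r : Fin k) (c : CplIdx δ s),
        ¬(((ofLex c).2 : ℕ) = cplα δ s (ofLex c).1 - 1) →
        (Kbar r c).degree < (δ : WithBot ℕ)) →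
      (∀ r, rdeg (fun c => -(cplShift δ s c : ℤ)) B r =
          Sum.elim (rdeg (fun j => -(s j : ℤ)) Kb) (fun _ => ((0 : ℤ) : WithBot ℤ)) r) ∧
      (IsWeakPopov (fun j => -(s j : ℤ)) Kb →
        IsUWeakPopov (fun c => -(cplShift δ s c : ℤ)) B)) := by
  intro B
  have hrow : ∀ i, (Kbar i) ᵥ* cplE K δ s = Kb i := by
    intro i; rw [hKE]; rfl
  refine ⟨aux_cdeg s δ hδ F, ?_, aux_basis s δ F Kb hKb Kbar hKE, ?_⟩
  · rw [aux_ker]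
    exact Submodule.map_comap_eq_of_surjective (aux_surj s δ) _
  intro h0 hdeg
  have h0' : ∀ i, ((0 : ℤ) : WithBot ℤ) ≤
      rdegRow (fun j => -(s j : ℤ)) (Kbar i ᵥ* cplE K δ s) := by
    intro i; rw [hrow]; exact h0 i
  refine ⟨?_, ?_⟩
  · rintro (i | r)
    · have := aux_rdeg s δ hδ (Kbar i) (hdeg i) (h0' i)
      rw [hrow] at this
      exact this
    · obtain ⟨⟨j, ⟨a, ha⟩⟩, rfl⟩ := toLex.surjective r
      exact (aux_Z_piv s δ hδ j a ha).1
  · rintro ⟨hp1, hp2⟩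
    have hK : ∀ i, ∃ j : Fin m, piv (fun j => -(s j : ℤ)) (Kb i) = (j : WithBot (Fin m)) ∧
        piv (fun c => -(cplShift δ s c : ℤ)) (B (Sum.inl i)) =
          ((auxLast s δ j : CplIdx δ s) : WithBot (CplIdx δ s)) := by
      intro i
      obtain ⟨j, hj⟩ := WithBot.ne_bot_iff_exists.1 (hp1 i)
      refine ⟨j, hj.symm, ?_⟩
      exact aux_piv_last s δ hδ (Kbar i) (hdeg i) (h0' i) j (by rw [hrow]; exact hj.symm)
    have hZ : ∀ (j : Fin m) (a : ℕ) (ha : a < cplα δ s j - 1),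
        piv (fun c => -(cplShift δ s c : ℤ)) (B (Sum.inr (toLex ⟨j, ⟨a, ha⟩⟩))) =
        ((auxCol s δ j a (by omega) : CplIdx δ s) : WithBot (CplIdx δ s)) :=
      fun j a ha => (aux_Z_piv s δ hδ j a ha).2
    have hcol : ∀ (j j' : Fin m) (a a' : ℕ) (ha : a < cplα δ s j) (ha' : a' < cplα δ s j'),
        auxCol s δ j a ha = auxCol s δ j' a' ha' → j = j' ∧ a = a' := by
      intro j j' a a' ha ha' h
      have h1 := toLex.injective h
      have h2 : j = j' := congrArg Sigma.fst h1
      subst h2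
      simp at h1
      exact ⟨rfl, h1⟩
    have hmix : ∀ (i : Fin k) (r : Lex ((j : Fin m) × Fin (cplα δ s j - 1))),
        piv (fun c => -(cplShift δ s c : ℤ)) (B (Sum.inl i)) ≠
          piv (fun c => -(cplShift δ s c : ℤ)) (B (Sum.inr r)) := by
      intro i r h
      obtain ⟨⟨j, ⟨a, ha⟩⟩, rfl⟩ := toLex.surjective r
      obtain ⟨j', _, h2⟩ := hK i
      rw [h2, hZ, WithBot.coe_inj] at h
      obtain ⟨h3, h4⟩ := hcol _ _ _ _ _ _ h
      subst h3
      omega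
    constructor
    · rintro (i | r)
      · obtain ⟨j, _, h2⟩ := hK i
        rw [h2]; exact WithBot.coe_ne_bot
      · obtain ⟨⟨j, ⟨a, ha⟩⟩, rfl⟩ := toLex.surjective r
        rw [hZ]; exact WithBot.coe_ne_bot
    · rintro (i | r) (i' | r') h
      · simp only at h
        obtain ⟨j, h1, h2⟩ := hK i
        obtain ⟨j', h1', h2'⟩ := hK i'
        rw [h2, h2', WithBot.coe_inj] at h
        obtain ⟨h3, -⟩ := hcol _ _ _ _ _ _ h
        subst h3
        congr 1
        exact hp2.injective (h1.trans h1'.symm)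
      · exact absurd h (hmix i r')
      · exact absurd h.symm (hmix i' r)
      · obtain ⟨⟨j, ⟨a, ha⟩⟩, rfl⟩ := toLex.surjective r
        obtain ⟨⟨j', ⟨a', ha'⟩⟩, rfl⟩ := toLex.surjective r'
        simp only at h
        rw [hZ, hZ, WithBot.coe_inj] at h
        obtain ⟨h3, h4⟩ := hcol _ _ _ _ _ _ h
        subst h3
        subst h4
        rfl
end

section
/- Let K be a field, fix s = (s_1,…,s_m) ∈ ℕ^m and δ ∈ ℤ_{>0}, with the associated α_j, β_j, m̄, expansion-compression matrix E and expanded shift s̄ as in the column partial linearization. Let F ∈ K[x]^{m×n} and r = m̄ − rank(F). Assume that every basis of ker(F) in −s-reduced form has nonnegative −s-row degree. Let Q ∈ K[x]^{r×m̄} be a basis of ker(EF) in −s̄-weak Popov form, and let P be the submatrix of Q formed by the rows whose −s̄-pivot index lies in {α_1+⋯+α_j : 1 ≤ j ≤ m}. Then P has exactly m − rank(F) rows, and P·E is a basis of ker(F) in −s-weak Popov form. -/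
open Polynomial Matrix

namespace CplProof

variable {K : Type*} [Field K]

lemma coeffZ_zero (d : ℤ) : coeffZ (0 : K[X]) d = 0 := by simp [coeffZ]

lemma coeffZ_add (p q : K[X]) (d : ℤ) : coeffZ (p + q) d = coeffZ p d + coeffZ q d := by
  unfold coeffZ; split_ifs <;> simp

lemma coeffZ_sub (p q : K[X]) (d : ℤ) : coeffZ (p - q) d = coeffZ p d - coeffZ q d := by
  unfold coeffZ; split_ifs <;> simp

lemma coeffZ_C_mul (c : K) (q : K[X]) (d : ℤ) : coeffZ (C c * q) d = c * coeffZ q d := by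
  unfold coeffZ; split_ifs <;> simp

lemma coeffZ_sum {ι : Type*} (S : Finset ι) (f : ι → K[X]) (d : ℤ) :
    coeffZ (∑ i ∈ S, f i) d = ∑ i ∈ S, coeffZ (f i) d := by
  unfold coeffZ; split_ifs <;> simp

lemma coeffZ_X_pow_mul (k : ℕ) (q : K[X]) (d : ℤ) :
    coeffZ (X ^ k * q) d = coeffZ q (d - k) := by
  unfold coeffZ
  by_cases h : 0 ≤ d - k
  · have h0 : 0 ≤ d := by omega
    rw [if_pos h, if_pos h0]
    have : d.toNat = (d - k).toNat + k := by omega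
    rw [this, coeff_X_pow_mul]
  · rw [if_neg h]
    split_ifs with h0
    · rw [coeff_X_pow_mul', if_neg (by omega)]
    · rfl

lemma coeffZ_eq_zero_of_natDegree_lt {q : K[X]} {d : ℤ} (h : (q.natDegree : ℤ) < d) :
    coeffZ q d = 0 := by
  unfold coeffZ
  rw [if_pos (by omega)]
  exact coeff_eq_zero_of_natDegree_lt (by omega)

lemma coeffZ_natDegree {q : K[X]} : coeffZ q (q.natDegree : ℤ) = q.leadingCoeff := by
  simp [coeffZ]

/-- `v` has leading position `(d, p)` for the shift `t`. -/
def IsLT {ν : Type*} [LinearOrder ν] (t : ν → ℤ) (v : ν → K[X]) (d : ℤ) (p : ν) : Prop :=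
  coeffZ (v p) (d - t p) ≠ 0 ∧
    ∀ e j, (d < e ∨ d = e ∧ p < j) → coeffZ (v j) (e - t j) = 0

section gen
variable {ν : Type*} [LinearOrder ν] {t : ν → ℤ}

lemma IsLT.ge {v : ν → K[X]} {d : ℤ} {p : ν} (h : IsLT t v d p) : t p ≤ d := by
  by_contra hc
  apply h.1
  unfold coeffZ
  rw [if_neg (by omega)]

lemma IsLT.ne_zero {v : ν → K[X]} {d : ℤ} {p : ν} (h : IsLT t v d p) : v ≠ 0 := by
  rintro rfl
  exact h.1 (coeffZ_zero _)

lemma IsLT.unique {v : ν → K[X]} {d d' : ℤ} {p p' : ν} (h : IsLT t v d p)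
    (h' : IsLT t v d' p') : d = d' ∧ p = p' := by
  rcases lt_trichotomy d d' with hd | hd | hd
  · exact absurd (h.2 _ _ (Or.inl hd)) h'.1
  · refine ⟨hd, ?_⟩
    rcases lt_trichotomy p p' with hp | hp | hp
    · exact absurd (h.2 _ _ (Or.inr ⟨hd, hp⟩)) h'.1
    · exact hp
    · exact absurd (h'.2 _ _ (Or.inr ⟨hd.symm, hp⟩)) h.1
  · exact absurd (h'.2 _ _ (Or.inl hd)) h.1

lemma exists_isLT [Fintype ν] (t : ν → ℤ) {v : ν → K[X]} (hv : v ≠ 0) :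
    ∃ d p, IsLT t v d p := by
  classical
  obtain ⟨j0, hj0⟩ := Function.ne_iff.mp hv
  obtain ⟨p, hp, hmax⟩ := Finset.exists_max_image
    (Finset.univ.filter fun j => v j ≠ 0)
    (fun j => (toLex (((v j).natDegree : ℤ) + t j, j) : ℤ ×ₗ ν)) ⟨j0, by simpa using hj0⟩
  simp only [Finset.mem_filter, Finset.mem_univ, true_and] at hp hmax
  refine ⟨(v p).natDegree + t p, p, ?_, ?_⟩
  · rw [add_sub_cancel_right, coeffZ_natDegree]
    simpa using hp
  · intro e j hej
    by_cases hj : v j = 0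
    · rw [hj, coeffZ_zero]
    have := hmax j hj
    rw [Prod.Lex.toLex_le_toLex] at this
    simp only at this
    apply coeffZ_eq_zero_of_natDegree_lt
    rcases hej with h | ⟨h, hpj⟩ <;> rcases this with h' | ⟨h', h''⟩
    · omega
    · omega
    · omega
    · exact absurd h'' (not_le.mpr hpj)

lemma IsLT.add {v w : ν → K[X]} {d e : ℤ} {p q : ν} (hv : IsLT t v d p) (hw : IsLT t w e q)
    (h : d < e ∨ d = e ∧ p < q) : IsLT t (v + w) e q := by
  constructor
  · rw [Pi.add_apply, coeffZ_add, hv.2 _ _ h, zero_add]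
    exact hw.1
  · intro f j hj
    rw [Pi.add_apply, coeffZ_add, hw.2 _ _ hj, add_zero]
    apply hv.2
    rcases h with h | ⟨h, h'⟩ <;> rcases hj with hj | ⟨hj, hj'⟩
    · left; omega
    · left; omega
    · left; omega
    · right; exact ⟨h.trans hj, h'.trans hj'⟩

lemma IsLT.smul {v : ν → K[X]} {d : ℤ} {p : ν} (hv : IsLT t v d p) {q : K[X]} (hq : q ≠ 0) :
    IsLT t (q • v) (d + q.natDegree) p := by
  have key : ∀ j f, coeffZ ((q • v) j) f =
      ∑ i ∈ Finset.range (q.natDegree + 1), q.coeff i * coeffZ (v j) (f - i) := by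
    intro j f
    rw [Pi.smul_apply, smul_eq_mul]
    conv_lhs => rw [q.as_sum_range_C_mul_X_pow, Finset.sum_mul, coeffZ_sum]
    refine Finset.sum_congr rfl fun i _ => ?_
    rw [mul_assoc, coeffZ_C_mul, coeffZ_X_pow_mul]
  constructor
  · rw [key, Finset.sum_range_succ, Finset.sum_eq_zero, zero_add]
    · refine mul_ne_zero (by simpa using hq) ?_
      have := hv.1
      rwa [show d + (q.natDegree : ℤ) - t p - (q.natDegree : ℤ) = d - t p by ring]
    · intro i hi
      rw [Finset.mem_range] at hi
      rw [show d + (q.natDegree : ℤ) - t p - i = (d + q.natDegree - i) - t p by ring,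
        hv.2 _ _ (Or.inl (by omega)), mul_zero]
  · intro e j h
    rw [key]
    apply Finset.sum_eq_zero
    intro i hi
    rw [Finset.mem_range] at hi
    rw [show e - t j - i = (e - i) - t j by ring, hv.2 _ _ ?_, mul_zero]
    rcases h with h | ⟨h, h'⟩
    · left; omega
    · rcases Nat.lt_or_ge i q.natDegree with h1 | h1
      · left; omega
      · right; exact ⟨by omega, h'⟩

lemma isLT_sum {ι : Type*} (S : Finset ι) (hS : S.Nonempty) (w : ι → ν → K[X]) (d : ι → ℤ)
    (p : ι → ν) (hw : ∀ i ∈ S, IsLT t (w i) (d i) (p i))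
    (hp : ∀ i ∈ S, ∀ j ∈ S, p i = p j → i = j) :
    ∃ i ∈ S, IsLT t (∑ i ∈ S, w i) (d i) (p i) := by
  classical
  induction hS using Finset.Nonempty.cons_induction with
  | singleton a => exact ⟨a, by simp, by simpa using hw a (by simp)⟩
  | cons a S ha hS ih =>
    obtain ⟨i, hi, hL⟩ := ih (fun i hi => hw i (by simp [hi]))
      (fun i hi j hj => hp i (by simp [hi]) j (by simp [hj]))
    have hA := hw a (by simp)
    rw [Finset.sum_cons]
    have hne : p a ≠ p i := fun h => ha (hp a (by simp) i (by simp [hi]) h ▸ hi)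
    have hlt : (d a < d i ∨ d a = d i ∧ p a < p i) ∨ (d i < d a ∨ d i = d a ∧ p i < p a) := by
      rcases lt_trichotomy (d a) (d i) with h | h | h
      · exact .inl (.inl h)
      · rcases lt_or_gt_of_ne hne with h' | h'
        · exact .inl (.inr ⟨h, h'⟩)
        · exact .inr (.inr ⟨h.symm, h'⟩)
      · exact .inr (.inl h)
    rcases hlt with h | h
    · exact ⟨i, by simp [hi], hA.add hL h⟩
    · refine ⟨a, by simp, ?_⟩
      rw [add_comm]
      exact hL.add hA h

/-- Predictable degree and pivot. -/
lemma isLT_comb {ι : Type*} [Fintype ι] (B : ι → ν → K[X]) (d : ι → ℤ) (p : ι → ν)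
    (hB : ∀ i, IsLT t (B i) (d i) (p i)) (hp : Function.Injective p)
    (l : ι → K[X]) (hl : l ≠ 0) :
    ∃ i, IsLT t (∑ i, l i • B i) (d i + (l i).natDegree) (p i) := by
  classical
  obtain ⟨i0, hi0⟩ := Function.ne_iff.mp hl
  obtain ⟨i, -, h⟩ := isLT_sum (t := t) (Finset.univ.filter fun i => l i ≠ 0)
    ⟨i0, by simpa using hi0⟩ (fun i => l i • B i) (fun i => d i + (l i).natDegree) p
    (fun i hi => (hB i).smul (by simpa using hi)) (fun i _ j _ h => hp h)
  refine ⟨i, ?_⟩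
  rwa [Finset.sum_filter_of_ne] at h
  intro x _ hx h0
  simp [h0] at hx

lemma linInd_of_isLT {ι : Type*} [Fintype ι] (B : ι → ν → K[X]) (d : ι → ℤ) (p : ι → ν)
    (hB : ∀ i, IsLT t (B i) (d i) (p i)) (hp : Function.Injective p) :
    LinearIndependent K[X] B := by
  rw [Fintype.linearIndependent_iff]
  intro l hl
  by_contra! hne
  obtain ⟨i, hi⟩ := hne
  obtain ⟨k, hk⟩ := isLT_comb B d p hB hp l (fun h => hi (by rw [h]; rfl))
  exact hk.ne_zero hl

lemma exists_pivot_of_mem_span {ι : Type*} [Fintype ι] (B : ι → ν → K[X]) (d : ι → ℤ)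
    (p : ι → ν) (hB : ∀ i, IsLT t (B i) (d i) (p i)) (hp : Function.Injective p)
    {v : ν → K[X]} (hv : v ∈ Submodule.span K[X] (Set.range B)) {e : ℤ} {q : ν}
    (hL : IsLT t v e q) : ∃ i, p i = q ∧ d i ≤ e := by
  obtain ⟨l, rfl⟩ := (Submodule.mem_span_range_iff_exists_fun K[X]).mp hv
  have hl : l ≠ 0 := by
    rintro rfl
    exact hL.ne_zero (by simp)
  obtain ⟨i, hi⟩ := isLT_comb B d p hB hp l hl
  obtain ⟨h1, h2⟩ := hi.unique hL
  exact ⟨i, h2, by omega⟩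

lemma span_of_pivots [Fintype ν] {ι : Type*} (B : ι → ν → K[X]) (d : ι → ℤ)
    (p : ι → ν) (hB : ∀ i, IsLT t (B i) (d i) (p i)) (M : Submodule K[X] (ν → K[X]))
    (hM : ∀ i, B i ∈ M)
    (h : ∀ v ∈ M, ∀ e q, IsLT t v e q → ∃ i, p i = q ∧ d i ≤ e) :
    Submodule.span K[X] (Set.range B) = M := by
  classical
  apply le_antisymm
  · rw [Submodule.span_le]
    rintro _ ⟨i, rfl⟩
    exact hM i
  obtain ⟨N, hN⟩ : ∃ N : ℤ, ∀ j, N ≤ t j := by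
    obtain ⟨N, hN⟩ := (Set.finite_range t).bddBelow
    exact ⟨N, fun j => hN ⟨j, rfl⟩⟩
  have main : ∀ a : ℕ ×ₗ ν, ∀ v ∈ M, ∀ e q, IsLT t v e q → a = toLex ((e - N).toNat, q) →
      v ∈ Submodule.span K[X] (Set.range B) := by
    intro a
    induction a using WellFoundedLT.induction with
    | ind a ih =>
    intro v hv e q hL ha
    obtain ⟨i, hi, hd⟩ := h v hv e q hL
    have hBi := hB i
    rw [hi] at hBi
    set k := (e - d i).toNat with hk
    set c := coeffZ (v q) (e - t q) / coeffZ (B i q) (d i - t q) with hc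
    set u : K[X] := C c * X ^ k with hu
    have hcoef : ∀ f j, coeffZ ((v - u • B i) j) (f - t j) =
        coeffZ (v j) (f - t j) - c * coeffZ (B i j) ((f - k) - t j) := by
      intro f j
      rw [Pi.sub_apply, coeffZ_sub, Pi.smul_apply, smul_eq_mul, hu, mul_assoc, coeffZ_C_mul,
        coeffZ_X_pow_mul]
      congr 3
      ring
    have huB : u • B i ∈ Submodule.span K[X] (Set.range B) :=
      Submodule.smul_mem _ _ (Submodule.subset_span ⟨i, rfl⟩)
    have hsub : v - u • B i ∈ Submodule.span K[X] (Set.range B) := by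
      by_cases h0 : v - u • B i = 0
      · rw [h0]; exact Submodule.zero_mem _
      obtain ⟨e', q', hL'⟩ := exists_isLT t h0
      refine ih _ ?_ _ (M.sub_mem hv (M.smul_mem _ (hM i))) e' q' hL' rfl
      have hN' := hL'.ge
      have hNq := hN q'
      have hz : ∀ f j, (e < f ∨ e = f ∧ q < j) →
          coeffZ ((v - u • B i) j) (f - t j) = 0 := by
        intro f j hfj
        rw [hcoef, hL.2 _ _ hfj, hBi.2, mul_zero, sub_zero]
        rcases hfj with h1 | ⟨h1, h2⟩
        · left; omega
        · right; exact ⟨by omega, h2⟩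
      have hz0 : coeffZ ((v - u • B i) q) (e - t q) = 0 := by
        rw [hcoef, show e - (k : ℤ) = d i by omega, hc, div_mul_cancel₀ _ hBi.1, sub_self]
      rw [ha, Prod.Lex.toLex_lt_toLex]
      rcases lt_trichotomy e e' with h1 | h1 | h1
      · exact absurd (hz _ _ (Or.inl h1)) hL'.1
      · right
        refine ⟨by rw [h1], ?_⟩
        rcases lt_trichotomy q q' with h2 | h2 | h2
        · exact absurd (hz _ _ (Or.inr ⟨h1, h2⟩)) hL'.1
        · subst h1 h2; exact absurd hz0 hL'.1
        · exact h2
      · left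
        show (e' - N).toNat < (e - N).toNat
        omega
    have := Submodule.add_mem _ hsub huB
    rwa [sub_add_cancel] at this
  intro v hv
  by_cases h0 : v = 0
  · rw [h0]; exact Submodule.zero_mem _
  obtain ⟨e, q, hL⟩ := exists_isLT t h0
  exact main _ v hv e q hL rfl

lemma degZ_of_ne {q : K[X]} (hq : q ≠ 0) : degZ q = ((q.natDegree : ℤ) : WithBot ℤ) := by
  unfold degZ
  rw [degree_eq_natDegree hq]
  rfl

lemma degZ_add_le {q : K[X]} {d a : ℤ} (h : ∀ e, d < e → coeffZ q (e - a) = 0) :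
    degZ q + (a : WithBot ℤ) ≤ (d : WithBot ℤ) := by
  by_cases hq : q = 0
  · subst hq; simp [degZ]
  rw [degZ_of_ne hq, ← WithBot.coe_add, WithBot.coe_le_coe]
  by_contra hc
  have := h (q.natDegree + a) (by omega)
  rw [add_sub_cancel_right, coeffZ_natDegree] at this
  exact hq (by simpa using this)

lemma IsLT.natDegree_eq {v : ν → K[X]} {d : ℤ} {p : ν} (h : IsLT t v d p) :
    ((v p).natDegree : ℤ) + t p = d := by
  have h0 : v p ≠ 0 := fun h0 => h.1 (by rw [h0, coeffZ_zero])
  apply le_antisymm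
  · by_contra hc
    have := h.2 ((v p).natDegree + t p) p (Or.inl (by omega))
    rw [add_sub_cancel_right, coeffZ_natDegree] at this
    exact h0 (by simpa using this)
  · by_contra hc
    exact h.1 (coeffZ_eq_zero_of_natDegree_lt (by omega))

lemma IsLT.rdegRow [Fintype ν] {v : ν → K[X]} {d : ℤ} {p : ν} (h : IsLT t v d p) :
    rdegRow t v = (d : WithBot ℤ) := by
  have h0 : v p ≠ 0 := fun h0 => h.1 (by rw [h0, coeffZ_zero])
  apply le_antisymm
  · exact Finset.sup_le fun j _ => degZ_add_le fun e he => h.2 e j (Or.inl he)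
  · have h1 : degZ (v p) + (t p : WithBot ℤ) = (d : WithBot ℤ) := by
      rw [degZ_of_ne h0, ← WithBot.coe_add, h.natDegree_eq]
    rw [← h1]
    exact Finset.le_sup (f := fun j => degZ (v j) + (t j : WithBot ℤ)) (Finset.mem_univ p)

lemma IsLT.piv [Fintype ν] {v : ν → K[X]} {d : ℤ} {p : ν} (h : IsLT t v d p) :
    piv t v = (p : WithBot ν) := by
  classical
  have h0 : v p ≠ 0 := fun h0 => h.1 (by rw [h0, coeffZ_zero])
  unfold _root_.piv
  rw [h.rdegRow]
  apply le_antisymm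
  · apply Finset.max_le
    intro j hj
    simp only [Finset.mem_filter, Finset.mem_univ, true_and] at hj
    obtain ⟨hj0, hj⟩ := hj
    rw [WithBot.coe_le_coe]
    by_contra hc
    rw [degZ_of_ne hj0, ← WithBot.coe_add, WithBot.coe_inj] at hj
    have := h.2 d j (Or.inr ⟨rfl, not_le.mp hc⟩)
    rw [← hj, add_sub_cancel_right, coeffZ_natDegree] at this
    exact hj0 (by simpa using this)
  · apply Finset.le_max
    simp only [Finset.mem_filter, Finset.mem_univ, true_and]
    exact ⟨h0, by rw [degZ_of_ne h0, ← WithBot.coe_add, h.natDegree_eq]⟩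

lemma piv_zero [Fintype ν] : piv t (0 : ν → K[X]) = ⊥ := by
  simp [piv]

lemma reduced_of_isLT [Fintype ν] {ι : Type*} [Fintype ι] (B : Matrix ι ν K[X]) (d : ι → ℤ)
    (p : ι → ν) (hB : ∀ i, IsLT t (B i) (d i) (p i)) (hp : Function.Injective p) :
    IsReducedForm t B := by
  classical
  unfold IsReducedForm
  rw [Fintype.linearIndependent_iff]
  intro l hl
  by_contra! hne
  obtain ⟨i0, hi0⟩ := hne
  have hlm : ∀ i j, lm t B i j = coeffZ (B i j) (d i - t j) := by
    intro i j
    simp only [lm, Matrix.of_apply, rdeg]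
    rw [(hB i).rdegRow]
    rfl
  obtain ⟨i, hi, hmax⟩ := Finset.exists_max_image (Finset.univ.filter fun i => l i ≠ 0) p
    ⟨i0, by simpa using hi0⟩
  simp only [Finset.mem_filter, Finset.mem_univ, true_and] at hi hmax
  have h1 := congrFun hl (p i)
  rw [Finset.sum_apply, Finset.sum_eq_single i] at h1
  · rw [Pi.smul_apply, smul_eq_mul, hlm] at h1
    exact mul_ne_zero hi (hB i).1 h1
  · intro k _ hk
    rw [Pi.smul_apply, smul_eq_mul, hlm]
    by_cases hlk : l k = 0
    · rw [hlk, zero_mul]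
    · rw [(hB k).2 _ _ (Or.inr ⟨rfl, lt_of_le_of_ne (hmax k hlk) fun h => hk (hp h)⟩), mul_zero]
  · simp

/-- The degree hypothesis on reduced bases bounds all elements. -/
lemma nonneg_of_reduced [Fintype ν] (M : Submodule K[X] (ν → K[X]))
    (hred : ∀ (k' : ℕ) (B : Matrix (Fin k') ν K[X]),
      IsBasisOf B M → IsReducedForm t B →
      ∀ i, ((0 : ℤ) : WithBot ℤ) ≤ rdeg t B i)
    {v : ν → K[X]} (hv : v ∈ M) {e : ℤ} {q : ν} (hL : IsLT t v e q) : 0 ≤ e := by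
  classical
  let J := {q : ν // ∃ e : ℤ, ∃ v ∈ M, IsLT t v e q}
  have hmin : ∀ q : J, ∃ e : ℤ, (∃ v ∈ M, IsLT t v e q.1) ∧
      ∀ e', (∃ v ∈ M, IsLT t v e' q.1) → e ≤ e' := by
    rintro ⟨q, hq⟩
    obtain ⟨e, h1, h2⟩ := Int.exists_least_of_bdd (P := fun e => ∃ v ∈ M, IsLT t v e q)
      ⟨t q, fun z ⟨v, _, hz⟩ => hz.ge⟩ hq
    exact ⟨e, h1, h2⟩
  choose d hd hdmin using hmin
  choose b hbM hbL using hd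
  let f := (Fintype.equivFin J).symm
  have hB : ∀ i, IsLT t (b (f i)) (d (f i)) (f i).1 := fun i => hbL _
  have hinj : Function.Injective fun i => (f i).1 :=
    Subtype.val_injective.comp f.injective
  have hspan := span_of_pivots (fun i => b (f i)) (fun i => d (f i)) (fun i => (f i).1) hB M
    (fun i => hbM _) (fun v hv e q h => by
      refine ⟨f.symm ⟨q, e, v, hv, h⟩, by simp, ?_⟩
      simp only [Equiv.apply_symm_apply]
      exact hdmin _ _ ⟨v, hv, h⟩)
  have := hred _ (Matrix.of fun i => b (f i))
    ⟨linInd_of_isLT _ _ _ hB hinj, hspan⟩ (reduced_of_isLT _ _ _ hB hinj)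
    (f.symm ⟨q, e, v, hv, hL⟩)
  unfold rdeg at this
  have h2 := (hB (f.symm ⟨q, e, v, hv, hL⟩)).rdegRow
  have h3 : ((0 : ℤ) : WithBot ℤ) ≤ (d (f (f.symm ⟨q, e, v, hv, hL⟩)) : WithBot ℤ) :=
    h2 ▸ this
  rw [WithBot.coe_le_coe, Equiv.apply_symm_apply] at h3
  exact h3.trans (hdmin _ _ ⟨v, hv, hL⟩)

end gen

section cpl
variable {m : ℕ} (δ : ℕ) (s : Fin m → ℕ)

lemma one_le_α (j : Fin m) : 1 ≤ cplα δ s j := le_max_left _ _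

lemma α_mul_lt {j : Fin m} (hδ : 0 < δ) (h : 2 ≤ cplα δ s j) :
    (cplα δ s j - 1) * δ < s j := by
  have h1 : cplα δ s j = (s j + δ - 1) / δ := by
    unfold cplα at h ⊢
    omega
  have h2 : (s j + δ - 1) / δ * δ ≤ s j + δ - 1 := Nat.div_mul_le_self _ _
  rw [← h1] at h2
  obtain ⟨a, ha⟩ : ∃ a, cplα δ s j = a + 1 := ⟨cplα δ s j - 1, by omega⟩
  rw [ha] at h2 ⊢
  rw [add_mul, one_mul] at h2
  rw [Nat.add_sub_cancel]
  omega

lemma s_eq {j : Fin m} (hδ : 0 < δ) :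
    s j = (cplα δ s j - 1) * δ + cplβ δ s j := by
  unfold cplβ
  rcases Nat.lt_or_ge (cplα δ s j) 2 with h | h
  · have : cplα δ s j - 1 = 0 := by omega
    rw [this]; omega
  · have := α_mul_lt δ s hδ h
    omega

/-- The last index of block `j`. -/
def lastIdx (j : Fin m) : CplIdx δ s :=
  toLex ⟨j, ⟨cplα δ s j - 1, by unfold cplα; omega⟩⟩

lemma shift_last (j : Fin m) : cplShift δ s (lastIdx δ s j) = cplβ δ s j := by
  simp [cplShift, lastIdx]

lemma shift_nonlast {j : Fin m} {i : Fin (cplα δ s j)} (h : (i : ℕ) + 1 < cplα δ s j) :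
    cplShift δ s (toLex ⟨j, i⟩) = δ := by
  have : ¬ ((i : ℕ) = cplα δ s j - 1) := by omega
  simp [cplShift, this]

lemma idx_cases (c : CplIdx δ s) : c = lastIdx δ s (ofLex c).1 ∨
    ∃ (j : Fin m) (i : Fin (cplα δ s j)), (i : ℕ) + 1 < cplα δ s j ∧ c = toLex ⟨j, i⟩ := by
  obtain ⟨j, i⟩ := c
  by_cases h : (i : ℕ) + 1 < cplα δ s j
  · exact Or.inr ⟨j, i, h, rfl⟩
  · left
    have : i = ⟨cplα δ s j - 1, by unfold cplα; omega⟩ := by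
      apply Fin.ext
      have := i.2
      show (i : ℕ) = cplα δ s j - 1
      omega
    show toLex ⟨j, i⟩ = lastIdx δ s j
    rw [this]
    rfl

lemma lastIdx_lt {j j' : Fin m} : lastIdx δ s j < lastIdx δ s j' ↔ j < j' := by
  unfold lastIdx
  rw [Sigma.Lex.lt_def]
  constructor
  · rintro (h | ⟨h, h'⟩)
    · exact h
    · have h0 : j = j' := h
      subst h0
      exact absurd h' (lt_irrefl _)
  · exact fun h => Or.inl h

lemma compress_apply (w : CplIdx δ s → K[X]) (j : Fin m) :
    (w ᵥ* cplE K δ s) j =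
      ∑ i : Fin (cplα δ s j), X ^ ((i : ℕ) * δ) * w (toLex ⟨j, i⟩) := by
  classical
  have h1 : (w ᵥ* cplE K δ s) j = ∑ c : (j : Fin m) × Fin (cplα δ s j),
      w (toLex c) * cplE K δ s (toLex c) j := rfl
  rw [h1, Fintype.sum_sigma, Finset.sum_eq_single j]
  · refine Finset.sum_congr rfl fun i _ => ?_
    simp [cplE, mul_comm]
  · intro k _ hk
    refine Finset.sum_eq_zero fun i _ => ?_
    simp [cplE, hk]
  · simp

lemma mem_ker_iff {n : ℕ} (F : Matrix (Fin m) (Fin n) K[X]) (w : CplIdx δ s → K[X]) :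
    w ∈ leftKernel (cplE K δ s * F) ↔ w ᵥ* cplE K δ s ∈ leftKernel F := by
  simp [leftKernel, LinearMap.mem_ker, Matrix.vecMul_vecMul]

/-- Compressing a row whose pivot is the last index of its block. -/
lemma isLT_compress (hδ : 0 < δ) {w : CplIdx δ s → K[X]} {d : ℤ} {p : Fin m}
    (h : IsLT (fun c => -(cplShift δ s c : ℤ)) w d (lastIdx δ s p)) :
    IsLT (fun j => -(s j : ℤ)) (w ᵥ* cplE K δ s) d p := by
  have key : ∀ e j, d ≤ e → coeffZ ((w ᵥ* cplE K δ s) j) (e - -(s j : ℤ)) =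
      coeffZ (w (lastIdx δ s j)) (e - -(cplShift δ s (lastIdx δ s j) : ℤ)) := by
    intro e j he
    rw [compress_apply, coeffZ_sum,
      Finset.sum_eq_single (⟨cplα δ s j - 1, by unfold cplα; omega⟩ : Fin (cplα δ s j))]
    · rw [coeffZ_X_pow_mul, shift_last]
      have := s_eq δ s (j := j) hδ
      show coeffZ (w (lastIdx δ s j)) _ = _
      congr 1
      simp only
      zify at this ⊢
      rw [this]
      ring
    · intro i _ hi
      have hi' : (i : ℕ) + 1 < cplα δ s j := by
        have := i.2
        by_contra hc
        exact hi (Fin.ext (by simp only; omega))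
      rw [coeffZ_X_pow_mul]
      have hs := α_mul_lt δ s hδ (j := j) (by omega)
      have hle : ((i : ℕ) + 1) * δ ≤ (cplα δ s j - 1) * δ := Nat.mul_le_mul_right _ (by omega)
      have h0 := h.2 (e + s j - ((i : ℕ) * δ : ℕ) - δ) (toLex ⟨j, i⟩) (Or.inl (by
        rw [add_mul, one_mul] at hle
        omega))
      beta_reduce at h0
      rw [shift_nonlast δ s hi'] at h0
      rw [← h0]
      congr 1
      ring
    · simp
  constructor
  · rw [key _ _ le_rfl]
    exact h.1
  · intro e j hej
    rw [key _ _ (by rcases hej with h | h <;> omega)]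
    apply h.2
    rcases hej with h1 | ⟨h1, h2⟩
    · exact Or.inl h1
    · exact Or.inr ⟨h1, (lastIdx_lt δ s).mpr h2⟩

lemma expand_poly (δ : ℕ) (a : ℕ) : ∀ q : K[X], ∃ w : ℕ → K[X],
    ∑ i ∈ Finset.range (a + 1), X ^ (i * δ) * w i = q ∧
    (∀ i < a, ∀ k, δ ≤ k → (w i).coeff k = 0) ∧ ∀ k, (w a).coeff k = q.coeff (a * δ + k) := by
  induction a with
  | zero => exact fun q => ⟨fun _ => q, by simp, by simp, by simp⟩
  | succ a ih =>
    intro q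
    have hm : (X ^ δ : K[X]).Monic := monic_X_pow δ
    have hdiv := modByMonic_add_div q (X ^ δ : K[X])
    have hcoef : ∀ k, δ ≤ k → (q %ₘ X ^ δ).coeff k = 0 := by
      intro k hk
      apply coeff_eq_zero_of_degree_lt
      refine (degree_modByMonic_lt q hm).trans_le ?_
      rw [degree_X_pow]
      exact_mod_cast hk
    obtain ⟨w, h1, h2, h3⟩ := ih (q /ₘ X ^ δ)
    refine ⟨fun i => Nat.casesOn i (q %ₘ X ^ δ) w, ?_, ?_, ?_⟩
    · rw [Finset.sum_range_succ']
      simp only [zero_mul, pow_zero, one_mul]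
      conv_rhs => rw [← hdiv, ← h1]
      rw [add_comm, Finset.mul_sum]
      congr 1
      refine Finset.sum_congr rfl fun i _ => ?_
      ring
    · intro i hi k hk
      cases i with
      | zero => exact hcoef k hk
      | succ i => exact h2 i (by omega) k hk
    · intro k
      show (w a).coeff k = _
      rw [h3]
      conv_rhs => rw [← hdiv]
      rw [coeff_add, hcoef _ (by rw [add_mul]; omega), zero_add,
        show (a + 1) * δ + k = (a * δ + k) + δ by ring, coeff_X_pow_mul]

/-- Expanding a row of nonnegative row degree. -/
lemma isLT_expand (hδ : 0 < δ) {v : Fin m → K[X]} {d : ℤ} {p : Fin m}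
    (h : IsLT (fun j => -(s j : ℤ)) v d p) (hd : 0 ≤ d) :
    ∃ w : CplIdx δ s → K[X], w ᵥ* cplE K δ s = v ∧
      IsLT (fun c => -(cplShift δ s c : ℤ)) w d (lastIdx δ s p) := by
  choose w h1 h2 h3 using fun j => expand_poly δ (cplα δ s j - 1) (v j)
  have hlast : ∀ e j, d ≤ e → coeffZ (w j (cplα δ s j - 1))
      (e - -(cplShift δ s (lastIdx δ s j) : ℤ)) = coeffZ (v j) (e - -(s j : ℤ)) := by
    intro e j he
    rw [shift_last]
    unfold coeffZ
    rw [if_pos (by omega), if_pos (by omega), h3]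
    congr 1
    have := s_eq δ s (j := j) hδ
    omega
  refine ⟨fun c => w (ofLex c).1 (ofLex c).2, ?_, ?_, ?_⟩
  · funext j
    rw [compress_apply]
    simp only [ofLex_toLex]
    rw [Fin.sum_univ_eq_sum_range (fun i => X ^ (i * δ) * w j i)]
    conv_rhs => rw [← h1 j]
    have := one_le_α δ s j
    rw [show cplα δ s j - 1 + 1 = cplα δ s j by omega]
  · exact (hlast d p le_rfl).trans_ne h.1
  · intro e c hc
    rcases idx_cases δ s c with hl | ⟨j, i, hi, rfl⟩
    · have he : d ≤ e := by rcases hc with h | h <;> omega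
      generalize (ofLex c).1 = j at hl
      subst hl
      refine (hlast e j he).trans (h.2 _ _ ?_)
      rcases hc with h1 | ⟨h1, h2⟩
      · exact Or.inl h1
      · exact Or.inr ⟨h1, (lastIdx_lt δ s).mp h2⟩
    · beta_reduce
      rw [shift_nonlast δ s hi]
      simp only [ofLex_toLex]
      unfold coeffZ
      have he : 0 ≤ e := by rcases hc with h | h <;> omega
      rw [if_pos (by omega)]
      exact h2 j i (by omega) _ (by omega)

/-- For every non-last index there is an element of the kernel of `E` with this pivot. -/
lemma exists_isLT_nonlast (hδ : 0 < δ) {j : Fin m} {i : Fin (cplα δ s j)}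
    (hi : (i : ℕ) + 1 < cplα δ s j) :
    ∃ w : CplIdx δ s → K[X], w ᵥ* cplE K δ s = 0 ∧
      IsLT (fun c => -(cplShift δ s c : ℤ)) w 0 (toLex ⟨j, i⟩) := by
  classical
  let c1 : CplIdx δ s := toLex ⟨j, ⟨i + 1, hi⟩⟩
  let c0 : CplIdx δ s := toLex ⟨j, i⟩
  have hlt : c0 < c1 := by
    rw [Sigma.Lex.lt_def]
    exact Or.inr ⟨rfl, by
      show i < (⟨i + 1, hi⟩ : Fin (cplα δ s j))
      simp [Fin.lt_def]⟩
  have hpos : 0 < cplShift δ s c1 := by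
    unfold cplShift
    split_ifs with h
    · have h1 := α_mul_lt δ s hδ (j := j) (by omega)
      have h2 := s_eq δ s (j := j) hδ
      show 0 < cplβ δ s j
      omega
    · exact hδ
  have hw : ∀ f c, coeffZ ((Pi.single c0 (X ^ δ) - Pi.single c1 1 : CplIdx δ s → K[X]) c) f =
      (if c = c0 ∧ f = δ then 1 else 0) - (if c = c1 ∧ f = 0 then 1 else 0) := by
    intro f c
    rw [Pi.sub_apply, coeffZ_sub]
    congr 1
    · by_cases hc : c = c0
      · subst hc
        rw [Pi.single_eq_same]
        unfold coeffZ
        rw [coeff_X_pow]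
        simp only [true_and]
        split_ifs <;> first | rfl | (exfalso; omega)
      · rw [Pi.single_eq_of_ne hc, coeffZ_zero, if_neg (fun h => hc h.1)]
    · by_cases hc : c = c1
      · subst hc
        rw [Pi.single_eq_same]
        unfold coeffZ
        rw [coeff_one]
        simp only [true_and]
        split_ifs <;> first | rfl | (exfalso; omega)
      · rw [Pi.single_eq_of_ne hc, coeffZ_zero, if_neg (fun h => hc h.1)]
  refine ⟨Pi.single c0 (X ^ δ) - Pi.single c1 1, ?_, ?_, ?_⟩
  · rw [Matrix.sub_vecMul, Matrix.single_vecMul, Matrix.single_vecMul]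
    funext k
    show (X : K[X]) ^ δ * (if j = k then X ^ ((i : ℕ) * δ) else 0) -
      1 * (if j = k then X ^ (((i : ℕ) + 1) * δ) else 0) = 0
    by_cases hk : j = k
    · simp only [if_pos hk]
      ring
    · simp only [if_neg hk]
      simp
  · beta_reduce
    rw [hw, shift_nonlast δ s hi, if_pos ⟨rfl, by ring⟩, if_neg (fun h => hlt.ne h.1)]
    simp
  · intro e c hc
    rw [hw, if_neg, if_neg, sub_zero]
    · rintro ⟨rfl, h⟩
      beta_reduce at h
      rcases hc with h' | h' <;> omega
    · rintro ⟨rfl, h⟩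
      beta_reduce at h
      rw [shift_nonlast δ s hi] at h
      rcases hc with h' | ⟨_, h'⟩
      · omega
      · exact lt_irrefl _ h'

end cpl

end CplProof

/-- Lemma 5.7: recovering a `(−s)`-weak Popov kernel basis
of `F` from the rows of a `(−s̄)`-weak Popov basis `Q` of `ker(EF)` whose
pivot index is the last index of its block: there are exactly `m − rank F`
such rows, and compressing them by `E` yields a basis of `ker F` in
`(−s)`-weak Popov form. -/
theorem cpl_recover_kernel_basis {K : Type*} [Field K] {m n r : ℕ}
    (s : Fin m → ℕ) (δ : ℕ) (hδ : 0 < δ)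
    (F : Matrix (Fin m) (Fin n) K[X])
    (hred : ∀ (k' : ℕ) (B : Matrix (Fin k') (Fin m) K[X]),
      IsBasisOf B (leftKernel F) → IsReducedForm (fun j => -(s j : ℤ)) B →
      ∀ i, ((0 : ℤ) : WithBot ℤ) ≤ rdeg (fun j => -(s j : ℤ)) B i)
    (hr : r = (∑ j, cplα δ s j) - F.rank)
    (Q : Matrix (Fin r) (CplIdx δ s) K[X])
    (hQbasis : IsBasisOf Q (leftKernel (cplE K δ s * F)))
    (hQwp : IsWeakPopov (fun c => -(cplShift δ s c : ℤ)) Q) :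
    let cond : Fin r → Prop := fun i => ∃ j : Fin m,
      piv (fun c => -(cplShift δ s c : ℤ)) (Q i) =
        ((toLex ⟨j, ⟨cplα δ s j - 1, by unfold cplα; omega⟩⟩ : CplIdx δ s) :
          WithBot (CplIdx δ s))
    let P : Matrix {i // cond i} (Fin m) K[X] :=
      Matrix.of fun i j => (Q i.1 ᵥ* cplE K δ s) j
    Nat.card {i // cond i} = m - F.rank ∧
    IsBasisOf P (leftKernel F) ∧
    IsWeakPopov (fun j => -(s j : ℤ)) P := by
  classical
  intro cond P
  have hQ : ∀ i, ∃ d p, CplProof.IsLT (fun c => -(cplShift δ s c : ℤ)) (Q i) d p := by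
    intro i
    apply CplProof.exists_isLT
    intro h0
    apply hQwp.1 i
    rw [h0, CplProof.piv_zero]
  choose d p hL using hQ
  have hpiv : ∀ i, piv (fun c => -(cplShift δ s c : ℤ)) (Q i) = (p i : WithBot _) :=
    fun i => (hL i).piv
  have hcond : ∀ i, cond i ↔ ∃ j, p i = CplProof.lastIdx δ s j := by
    intro i
    show (∃ j, piv (fun c => -(cplShift δ s c : ℤ)) (Q i) =
      (CplProof.lastIdx δ s j : WithBot (CplIdx δ s))) ↔ _
    simp only [hpiv, WithBot.coe_inj]
  have hmono : StrictMono p := by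
    intro i i' h
    have := hQwp.2 h
    simp only [hpiv, WithBot.coe_lt_coe] at this
    exact this
  have hpinj : Function.Injective p := hmono.injective
  have hlinj : Function.Injective (CplProof.lastIdx δ s) := by
    intro j j' h
    exact congrArg (fun c => (ofLex c).1) h
  have hex : ∀ w ∈ leftKernel (cplE K δ s * F), ∀ e q,
      CplProof.IsLT (fun c => -(cplShift δ s c : ℤ)) w e q → ∃ i, p i = q ∧ d i ≤ e := by
    intro w hw e q h
    rw [← hQbasis.2] at hw
    exact CplProof.exists_pivot_of_mem_span (fun i => Q i) d p hL hpinj hw h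
  have hQmem : ∀ i, Q i ∈ leftKernel (cplE K δ s * F) := by
    intro i
    rw [← hQbasis.2]
    exact Submodule.subset_span ⟨i, rfl⟩
  choose jj hjj using fun i : {i // cond i} => (hcond i.1).mp i.2
  have hPL : ∀ i : {i // cond i},
      CplProof.IsLT (fun j => -(s j : ℤ)) (P i) (d i.1) (jj i) := by
    intro i
    have := hL i.1
    rw [hjj i] at this
    exact CplProof.isLT_compress δ s hδ this
  have hjmono : StrictMono jj := by
    intro i i' h
    have h1 := hmono (show i.1 < i'.1 from h)
    rw [hjj, hjj, CplProof.lastIdx_lt] at h1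
    exact h1
  refine ⟨?_, ⟨?_, ?_⟩, ?_, ?_⟩
  · have hcard : Fintype.card (CplIdx δ s) = ∑ j, cplα δ s j := by
      have : Fintype.card (CplIdx δ s) = Fintype.card ((j : Fin m) × Fin (cplα δ s j)) := rfl
      rw [this, Fintype.card_sigma]
      simp
    set L : Finset (CplIdx δ s) := Finset.univ.image (CplProof.lastIdx δ s) with hLdef
    have hLcard : L.card = m := by
      rw [hLdef, Finset.card_image_of_injective _ hlinj, Finset.card_univ, Fintype.card_fin]
    set I : Finset (CplIdx δ s) := Finset.univ.image p with hIdef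
    have hIcard : I.card = r := by
      rw [hIdef, Finset.card_image_of_injective _ hpinj, Finset.card_univ, Fintype.card_fin]
    have hsub : Lᶜ ⊆ I := by
      intro c hc
      rcases CplProof.idx_cases δ s c with h | ⟨j, i, hi, rfl⟩
      · rw [Finset.mem_compl] at hc
        exact absurd (by rw [h, hLdef]; simp) hc
      · obtain ⟨w, hw, hwL⟩ := CplProof.exists_isLT_nonlast (K := K) δ s hδ hi
        obtain ⟨k, hk, -⟩ := hex w
          (by rw [CplProof.mem_ker_iff, hw]; exact Submodule.zero_mem _) _ _ hwL
        rw [hIdef, Finset.mem_image]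
        exact ⟨k, Finset.mem_univ _, hk⟩
    have hsplit : I \ Lᶜ = (Finset.univ.filter cond).image p := by
      ext c
      simp only [Finset.mem_sdiff, Finset.mem_compl, not_not, hIdef, hLdef, Finset.mem_image,
        Finset.mem_univ, true_and, Finset.mem_filter]
      constructor
      · rintro ⟨⟨i, rfl⟩, j, hj⟩
        exact ⟨i, (hcond i).mpr ⟨j, hj.symm⟩, rfl⟩
      · rintro ⟨i, hi, rfl⟩
        obtain ⟨j, hj⟩ := (hcond i).mp hi
        exact ⟨⟨i, rfl⟩, j, hj.symm⟩
    have h1 := Finset.card_sdiff_of_subset hsub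
    rw [hsplit, Finset.card_image_of_injective _ hpinj, hIcard, Finset.card_compl, hLcard,
      hcard] at h1
    have h2 : m ≤ ∑ j, cplα δ s j := 
      hLcard.symm.le.trans ((Finset.card_le_univ L).trans hcard.le)
    have h3 : F.rank ≤ m := F.rank_le_height
    have h4 : (Finset.univ.filter cond).card = m - F.rank := by
      rw [h1]
      omega
    rw [← h4]
    exact Nat.subtype_card _ (by simp)
  · exact CplProof.linInd_of_isLT _ _ _ hPL hjmono.injective
  · refine CplProof.span_of_pivots _ _ _ hPL _ ?_ ?_
    · intro i
      exact (CplProof.mem_ker_iff δ s F _).mp (hQmem i.1)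
    · intro v hv e q hvL
      have he := CplProof.nonneg_of_reduced (leftKernel F) hred hv hvL
      obtain ⟨w, hw, hwL⟩ := CplProof.isLT_expand δ s hδ hvL he
      obtain ⟨k, hk, hke⟩ := hex w (by rw [CplProof.mem_ker_iff, hw]; exact hv) _ _ hwL
      refine ⟨⟨k, (hcond k).mpr ⟨q, hk⟩⟩, ?_, hke⟩
      apply hlinj
      rw [← hjj]
      exact hk
  · intro i
    rw [(hPL i).piv]
    exact WithBot.coe_ne_bot
  · intro i i' h
    show piv _ (P i) < piv _ (P i')
    rw [(hPL i).piv, (hPL i').piv, WithBot.coe_lt_coe]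
    exact hjmono h
end
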